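/- For every r ≥ 0 there exists a constant C = C(r) > 0, independent of d, n, f and the measure, such that for all integers d ≥ 3 and n ≥ 2(d+1), every f ∈ C(S^d), and every ν ∈ MZQ(d; 2(d+2)n): E_{d;2(d+2)n}(f) ≤ ‖f − σ̃_{d;n,r}(ν,f)‖_∞ ≤ C · d^{1/6} · |||ν|||_{d;2(d+2)n} · E_{d;n}(f), and likewise E_{d;2(d+2)n}(f) ≤ ‖f − σ_{d;n,r}(ν,f)‖_∞ ≤ C · d^{1/6} · |||ν|||_{d;2(d+2)n} · E_{d;n}(f). -/

import Mathlib

noncomputable section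

open MeasureTheory Real Set
open scoped RealInnerProductSpace

/-- Value at `x` of the orthonormalized Jacobi polynomial `p_n^{(α,β)}`. -/
def jacobiP (α β : ℝ) (n : ℕ) (x : ℝ) : ℝ :=
  Real.sqrt ((2 * (n : ℝ) + α + β + 1) / 2 ^ (α + β + 1) *
      (Real.Gamma ((n : ℝ) + α + β + 1) * (n.factorial : ℝ) /
        (Real.Gamma ((n : ℝ) + α + 1) * Real.Gamma ((n : ℝ) + β + 1)))) *
    (Real.Gamma (α + n + 1) / ((n.factorial : ℝ) * Real.Gamma (α + β + n + 1))) *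
    ∑ m ∈ Finset.range (n + 1),
      (n.choose m : ℝ) * (Real.Gamma (α + β + n + m + 1) / Real.Gamma (α + m + 1)) *
        ((x - 1) / 2) ^ m

/-- The kernel `K_n^{(α,β)}(x) = Σ_{ℓ<n} p_ℓ^{(α,β)}(1) p_ℓ^{(α,β)}(x)`. -/
def jacobiK (α β : ℝ) (n : ℕ) (x : ℝ) : ℝ :=
  ∑ ℓ ∈ Finset.range n, jacobiP α β ℓ 1 * jacobiP α β ℓ x

/-- The unit sphere `S^d ⊂ ℝ^{d+1}`. -/
abbrev Sph (d : ℕ) := Metric.sphere (0 : EuclideanSpace ℝ (Fin (d + 1))) 1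

/-- The rotation invariant Riemannian volume probability measure `μ_d^*` on `S^d`. -/
def sphMeasure (d : ℕ) : Measure (Sph d) :=
  ((volume : Measure (EuclideanSpace ℝ (Fin (d + 1)))).toSphere Set.univ)⁻¹ •
    (volume : Measure (EuclideanSpace ℝ (Fin (d + 1)))).toSphere

/-- `f : S^d → ℝ` is the restriction to the sphere of an algebraic polynomial in `d+1`
variables of total degree `< n`, i.e. `f ∈ Π_n^d`. -/
def IsSphPoly (d : ℕ) (n : ℝ) (f : Sph d → ℝ) : Prop :=
  ∃ p : MvPolynomial (Fin (d + 1)) ℝ, (p.totalDegree : ℝ) < n ∧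
    ∀ y : Sph d, f y = MvPolynomial.eval (fun i => (y : EuclideanSpace ℝ (Fin (d + 1))) i) p

/-- Integral of `f` with respect to a signed measure (via the Jordan decomposition). -/
def sInt {X : Type*} [MeasurableSpace X] (ν : SignedMeasure X) (f : X → ℝ) : ℝ :=
  (∫ x, f x ∂ν.toJordanDecomposition.posPart) - ∫ x, f x ∂ν.toJordanDecomposition.negPart

/-- Integral of `f` over a set `s` with respect to a signed measure. -/
def sIntOn {X : Type*} [MeasurableSpace X] (ν : SignedMeasure X) (s : Set X) (f : X → ℝ) : ℝ :=
  (∫ x in s, f x ∂ν.toJordanDecomposition.posPart) -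
    ∫ x in s, f x ∂ν.toJordanDecomposition.negPart

/-- `ν` is a quadrature measure of order `n` on `S^d`. -/
def IsQuadrature (d : ℕ) (n : ℝ) (ν : SignedMeasure (Sph d)) : Prop :=
  ∀ f : Sph d → ℝ, IsSphPoly d n f → sInt ν f = ∫ y, f y ∂sphMeasure d

/-- `ν` satisfies the Marcinkiewicz-Zygmund inequality of order `n` with constant `c`;
`ν ∈ MZ(d;n)` means this holds for some `c`, and `|||ν|||_{d;n}` is the least such `c`. -/
def IsMZ (d : ℕ) (n : ℝ) (ν : SignedMeasure (Sph d)) (c : ℝ) : Prop :=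
  ∀ f : Sph d → ℝ, IsSphPoly d (n / 2) f →
    (∫ y, (f y) ^ 2 ∂ν.totalVariation) ≤ c * ∫ y, (f y) ^ 2 ∂sphMeasure d

/-- `ω_d`, the volume of `S^d`. -/
def omegaS (d : ℕ) : ℝ := 2 * Real.pi ^ (((d : ℝ) + 1) / 2) / Real.Gamma (((d : ℝ) + 1) / 2)

/-- The reproducing kernel `K_{d;n}` of `Π_n^d`. -/
def sphK (d n : ℕ) (x : ℝ) : ℝ :=
  (omegaS d / omegaS (d - 1)) * jacobiK ((d : ℝ) / 2 - 1) ((d : ℝ) / 2 - 1) n x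

/-- The kernel `Φ̃_{d;n,r}`. -/
def PhiTilde (d n : ℕ) (r : ℝ) (x : ℝ) : ℝ :=
  sphK d ((d + 2) * n) x *
    (jacobiP ((d : ℝ) / 2 + r) ((d : ℝ) / 2 - 2) (d * n) x /
      jacobiP ((d : ℝ) / 2 + r) ((d : ℝ) / 2 - 2) (d * n) 1)

/-- The kernel `Φ_{d;n,r}`. -/
def Phi (d n : ℕ) (r : ℝ) (x : ℝ) : ℝ := PhiTilde d n r x * ((1 + x) / 2) ^ n

/-- The inner product `x·y` of two points of `S^d`. -/
def ip {d : ℕ} (x y : Sph d) : ℝ :=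
  ⟪(x : EuclideanSpace ℝ (Fin (d + 1))), (y : EuclideanSpace ℝ (Fin (d + 1)))⟫

/-- The operator `σ_{d;n,r}(ν, f)`. -/
def sigmaOp (d n : ℕ) (r : ℝ) (ν : SignedMeasure (Sph d)) (f : Sph d → ℝ) (x : Sph d) : ℝ :=
  sInt ν (fun y => f y * Phi d n r (ip x y))

/-- The operator `σ̃_{d;n,r}(ν, f)`. -/
def sigmaTildeOp (d n : ℕ) (r : ℝ) (ν : SignedMeasure (Sph d)) (f : Sph d → ℝ) (x : Sph d) : ℝ :=
  sInt ν (fun y => f y * PhiTilde d n r (ip x y))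

/-- The uniform (supremum) norm `‖f‖_∞`. -/
def supNorm {X : Type*} (f : X → ℝ) : ℝ := sSup (Set.range fun x => |f x|)

/-- `E_{d;n}(f)`, the degree of approximation of `f` from `Π_n^d` in the uniform norm. -/
def bestApprox (d : ℕ) (n : ℝ) (f : Sph d → ℝ) : ℝ :=
  sInf {t | ∃ g, IsSphPoly d n g ∧ ∀ y, |f y - g y| ≤ t}

/-- `dim Π_n^d = (2n+d−2)·Γ(n+d−1)/(Γ(n)·Γ(d+1))` (for `n ≥ 2`). -/
def dimPi (d n : ℕ) : ℝ :=
  (2 * (n : ℝ) + d - 2) * Real.Gamma ((n : ℝ) + d - 1) /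
    (Real.Gamma n * Real.Gamma ((d : ℝ) + 1))

/-!
In the variable `u = (1 - x·y)/2` the kernels are polynomials `K·Q·R`, where `K` is the reproducing
kernel of `Π_{(d+2)n}^d`, `Q` is a normalized Jacobi polynomial of degree `dn`, `R` is `1` or
`(1 - u)^n`, and `Q(0) = R(0) = 1`. Multiplying `g ∈ Π_n^d` by `Q·R` stays inside the range of
reproduction and does not change the value at `x = y`, so the operators reproduce `Π_n^d`, and
Lebesgue's inequality reduces everything to a bound for `∫ |K·Q·R| d|ν|`.

As `|R| ≤ 1`, Cauchy–Schwarz and the Marcinkiewicz–Zygmund inequality bound this integral by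
`|||ν|||` times the product of the `L²(μ_d^*)` norms of `K` and `Q`. The push-forward of `μ_d^*`
under `u` is the beta distribution with parameters `(d/2, d/2)`, for which `∫ K² = K(0)` is a
Christoffel number and `∫ Q²` is, up to a constant depending on `r`, at most the reciprocal of a
Christoffel number of degree `dn`. The ratio of these two numbers is at most `e²`.
-/

open ProbabilityTheory

/-! ### Moments of the beta distribution -/

/-- The rising factorial `x (x + 1) ⋯ (x + k - 1)`. -/
def rising (x : ℝ) (k : ℕ) : ℝ := (ascPochhammer ℝ k).eval x

lemma rising_zero (x : ℝ) : rising x 0 = 1 := by simp [rising]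

lemma rising_succ (x : ℝ) (k : ℕ) : rising x (k + 1) = rising x k * (x + k) :=
  ascPochhammer_succ_eval k x

lemma rising_add (x : ℝ) (m k : ℕ) : rising x (m + k) = rising x m * rising (x + m) k := by
  simp [rising, ← ascPochhammer_mul, Polynomial.eval_comp]

lemma mul_rising_add_one (x : ℝ) (k : ℕ) : x * rising (x + 1) k = rising x k * (x + k) := by
  rw [← rising_succ, add_comm k 1, rising_add x 1 k]
  simp [rising]

lemma rising_pos {x : ℝ} (hx : 0 < x) (k : ℕ) : 0 < rising x k := ascPochhammer_pos k x hx

lemma rising_le_div_pow_mul {x y : ℝ} (hx : 0 < x) (hxy : x ≤ y) (k : ℕ) :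
    rising y k ≤ (y / x) ^ k * rising x k := by
  have hy : 0 < y := hx.trans_le hxy
  induction k with
  | zero => simp [rising_zero]
  | succ k ih =>
    have := rising_pos hx k
    have hstep : y + k ≤ y / x * (x + k) := by
      have h1 : 1 ≤ y / x := (one_le_div hx).2 hxy
      rw [mul_add, div_mul_cancel₀ _ hx.ne']
      linarith [mul_le_mul_of_nonneg_right h1 (Nat.cast_nonneg (α := ℝ) k)]
    calc rising y (k + 1) = rising y k * (y + k) := rising_succ y k
      _ ≤ (y / x) ^ k * rising x k * (y / x * (x + k)) := by gcongr
      _ = (y / x) ^ (k + 1) * rising x (k + 1) := by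
        rw [rising_succ]
        ring

lemma factorial_mul_rising_succ (k m : ℕ) :
    (k.factorial : ℝ) * rising (k + 1) m = m.factorial * rising (m + 1) k := by
  have h (k m : ℕ) : (k.factorial : ℝ) * rising (k + 1) m = (k + m).factorial := by
    rw [rising, ← Nat.cast_succ, ascPochhammer_nat_eq_natCast_ascFactorial, ← Nat.cast_mul,
      Nat.factorial_mul_ascFactorial]
  rw [h, h, add_comm]

lemma Gamma_add_natCast {x : ℝ} (hx : 0 < x) (k : ℕ) :
    Real.Gamma (x + k) = rising x k * Real.Gamma x := by
  induction k with
  | zero => simp [rising_zero]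
  | succ k ih =>
    rw [Nat.cast_succ, ← add_assoc, Real.Gamma_add_one (by positivity), ih, rising_succ]
    ring

lemma beta_add_natCast {a b : ℝ} (ha : 0 < a) (hb : 0 < b) (k : ℕ) :
    beta (a + k) b / beta a b = rising a k / rising (a + b) k := by
  have : 0 < rising (a + b) k := rising_pos (by positivity) k
  rw [beta, beta, add_right_comm, Gamma_add_natCast ha, Gamma_add_natCast (add_pos ha hb)]
  field_simp

lemma measurable_betaPDF (a b : ℝ) : Measurable (betaPDF a b) :=
  (measurable_betaPDFReal a b).ennreal_ofReal

lemma ae_mem_Ioo_betaMeasure (a b : ℝ) : ∀ᵐ u ∂betaMeasure a b, u ∈ Ioo (0 : ℝ) 1 := by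
  rw [betaMeasure, ae_withDensity_iff (measurable_betaPDF a b)]
  refine .of_forall fun u hu => ?_
  by_contra h
  rcases le_or_gt u 0 with h0 | h0
  · exact hu (betaPDF_eq_zero_of_nonpos h0)
  · exact hu (betaPDF_eq_zero_of_one_le (not_lt.1 fun h1 => h ⟨h0, h1⟩))

lemma integral_betaMeasure {a b : ℝ} (ha : 0 < a) (hb : 0 < b) (f : ℝ → ℝ) :
    ∫ u, f u ∂betaMeasure a b =
      (beta a b)⁻¹ * ∫ u in Ioo (0 : ℝ) 1, u ^ (a - 1) * (1 - u) ^ (b - 1) * f u := by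
  rw [betaMeasure, integral_withDensity_eq_integral_toReal_smul
    (measurable_betaPDF a b) (.of_forall fun _ => ENNReal.ofReal_lt_top),
    ← integral_const_mul, ← integral_indicator measurableSet_Ioo]
  refine integral_congr_ae (.of_forall fun u => ?_)
  by_cases hu : u ∈ Ioo (0 : ℝ) 1
  · have hpdf := betaPDFReal_pos hu.1 hu.2 ha hb
    simp only [indicator_of_mem hu, betaPDF, ENNReal.toReal_ofReal hpdf.le, smul_eq_mul]
    rw [betaPDFReal, if_pos (show 0 < u ∧ u < 1 from hu)]
    ring
  · simp [indicator_of_notMem hu, betaPDF, betaPDFReal, if_neg (show ¬(0 < u ∧ u < 1) from hu)]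

lemma integrable_betaMeasure {a b : ℝ} (ha : 0 < a) (hb : 0 < b) {f : ℝ → ℝ}
    (hf : Continuous f) : Integrable f (betaMeasure a b) := by
  have := isProbabilityMeasureBeta ha hb
  obtain ⟨M, hM⟩ := (isCompact_Icc (a := (0 : ℝ)) (b := 1)).exists_bound_of_continuousOn
    hf.continuousOn
  refine .of_bound hf.aestronglyMeasurable M ?_
  filter_upwards [ae_mem_Ioo_betaMeasure a b] with u hu
  exact hM u (Ioo_subset_Icc_self hu)

lemma integral_betaMeasure_add {a b s t : ℝ} (ha : 0 < a) (hb : 0 < b) (has : 0 < a + s)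
    (hbt : 0 < b + t) (f : ℝ → ℝ) :
    ∫ u, u ^ s * (1 - u) ^ t * f u ∂betaMeasure a b =
      beta (a + s) (b + t) / beta a b * ∫ u, f u ∂betaMeasure (a + s) (b + t) := by
  rw [integral_betaMeasure ha hb, integral_betaMeasure has hbt, div_eq_inv_mul, mul_assoc,
    mul_inv_cancel_left₀ (beta_pos has hbt).ne']
  congr 1
  refine setIntegral_congr_fun measurableSet_Ioo fun u hu => ?_
  have hu' : 0 < 1 - u := sub_pos.2 hu.2
  rw [add_sub_right_comm, add_sub_right_comm, Real.rpow_add hu.1, Real.rpow_add hu']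
  ring

lemma integral_pow_mul_betaMeasure {a b : ℝ} (ha : 0 < a) (hb : 0 < b) (k : ℕ) (f : ℝ → ℝ) :
    ∫ u, u ^ k * f u ∂betaMeasure a b =
      rising a k / rising (a + b) k * ∫ u, f u ∂betaMeasure (a + k) b := by
  have h := integral_betaMeasure_add ha hb (s := k) (t := 0) (by positivity) (by simpa using hb) f
  simpa [beta_add_natCast ha hb] using h

lemma integral_pow_betaMeasure {a b : ℝ} (ha : 0 < a) (hb : 0 < b) (k : ℕ) :
    ∫ u, u ^ k ∂betaMeasure a b = rising a k / rising (a + b) k := by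
  have := isProbabilityMeasureBeta (show 0 < a + k by positivity) hb
  simpa using integral_pow_mul_betaMeasure ha hb k fun _ => 1

/-! ### Jacobi polynomials on the unit interval -/

/-- The `k`-th coefficient of `jacobiPoly a b N`. -/
def jacobiCoeff (a b : ℝ) (N k : ℕ) : ℝ :=
  (-1) ^ k * (N.choose k : ℝ) * (rising (N + a + b - 1) k / rising a k)

/-- The Jacobi polynomial `P_N^{(a-1,b-1)}(1 - 2u)` in the variable `u`, normalized to take the
value `1` at `u = 0`; the family in `N` is orthogonal for the beta distribution with parameters
`a` and `b`. -/
def jacobiPoly (a b : ℝ) (N : ℕ) : Polynomial ℝ :=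
  ∑ k ∈ Finset.range (N + 1), Polynomial.C (jacobiCoeff a b N k) * Polynomial.X ^ k

/-- The value at `u = 0` of the reproducing kernel of the polynomials of degree at most `N` in
`L²` of the beta distribution, that is `∑_{ℓ ≤ N} p_ℓ(0)²` for its orthonormal polynomials `p_ℓ`
(the reciprocal of the Christoffel function), in closed form. -/
def christoffel (a b : ℝ) (N : ℕ) : ℝ :=
  rising (a + b) N * rising (a + 1) N / (N.factorial * rising b N)

/-- The increments `p_ℓ(0)²` of `christoffel`. -/
def christoffelIncr (a b : ℝ) : ℕ → ℝ
  | 0 => christoffel a b 0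
  | j + 1 => christoffel a b (j + 1) - christoffel a b j

lemma jacobiCoeff_of_lt (a b : ℝ) {N k : ℕ} (h : N < k) : jacobiCoeff a b N k = 0 := by
  simp [jacobiCoeff, Nat.choose_eq_zero_of_lt h]

lemma coeff_jacobiPoly (a b : ℝ) (N k : ℕ) : (jacobiPoly a b N).coeff k = jacobiCoeff a b N k := by
  simp only [jacobiPoly, Polynomial.finsetSum_coeff, Polynomial.coeff_C_mul_X_pow,
    Finset.sum_ite_eq, Finset.mem_range]
  split_ifs with h
  · rfl
  · exact (jacobiCoeff_of_lt a b (by omega)).symm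

lemma natDegree_jacobiPoly_le (a b : ℝ) (N : ℕ) : (jacobiPoly a b N).natDegree ≤ N := by
  rw [Polynomial.natDegree_le_iff_coeff_eq_zero]
  intro k hk
  rw [coeff_jacobiPoly, jacobiCoeff_of_lt a b hk]

lemma eval_jacobiPoly (a b : ℝ) (N : ℕ) (u : ℝ) :
    (jacobiPoly a b N).eval u = ∑ k ∈ Finset.range (N + 1), jacobiCoeff a b N k * u ^ k := by
  simp [jacobiPoly, Polynomial.eval_finsetSum]

lemma eval_jacobiPoly_zero (a b : ℝ) (N : ℕ) : (jacobiPoly a b N).eval 0 = 1 := by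
  rw [← Polynomial.coeff_zero_eq_eval_zero, coeff_jacobiPoly]
  simp [jacobiCoeff, rising_zero]

lemma eval_jacobiPoly_degree_zero (a b u : ℝ) : (jacobiPoly a b 0).eval u = 1 := by
  simp [eval_jacobiPoly, jacobiCoeff, rising_zero]

lemma christoffel_zero (a b : ℝ) : christoffel a b 0 = 1 := by simp [christoffel, rising_zero]

section Christoffel

variable {a b : ℝ} (ha : 0 < a) (hb : 0 < b)
include ha hb

lemma christoffel_pos (N : ℕ) : 0 < christoffel a b N := by
  have := rising_pos (add_pos ha hb) N
  have := rising_pos (show 0 < a + 1 by positivity) N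
  have := rising_pos hb N
  unfold christoffel
  positivity

lemma christoffel_succ (N : ℕ) :
    christoffel a b (N + 1) =
      christoffel a b N * ((N + a + b) * (N + a + 1)) / ((N + 1) * (N + b)) := by
  have := rising_pos (add_pos ha hb) N
  have := rising_pos (show 0 < a + 1 by positivity) N
  have := rising_pos hb N
  simp only [christoffel, rising_succ, Nat.factorial_succ, Nat.cast_mul, Nat.cast_succ]
  field_simp
  ring

lemma christoffel_le_succ (N : ℕ) : christoffel a b N ≤ christoffel a b (N + 1) := by
  have := christoffel_pos ha hb N
  rw [christoffel_succ ha hb, le_div_iff₀ (by positivity)]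
  gcongr christoffel a b N * ?_
  nlinarith [mul_pos ha hb, mul_nonneg (Nat.cast_nonneg (α := ℝ) N) ha.le]

lemma christoffelIncr_nonneg (j : ℕ) : 0 ≤ christoffelIncr a b j := by
  cases j with
  | zero => exact (christoffel_pos ha hb 0).le
  | succ j => exact sub_nonneg.2 (christoffel_le_succ ha hb j)

lemma christoffel_mul_jacobiCoeff_succ (N k : ℕ) :
    christoffel a b (N + 1) * jacobiCoeff (a + 1) b (N + 1) k =
      christoffel a b N * jacobiCoeff (a + 1) b N k +
        christoffelIncr a b (N + 1) * jacobiCoeff a b (N + 1) k := by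
  rcases lt_or_ge (N + 1) k with hk | hk
  · rw [jacobiCoeff_of_lt _ _ hk, jacobiCoeff_of_lt _ _ hk, jacobiCoeff_of_lt _ _ (by omega)]
    ring
  have := rising_pos ha k
  have := rising_pos (show 0 < N + a + b by positivity) k
  have hchoose : (N.choose k : ℝ) = (N + 1).choose k * (N + 1 - k) / (N + 1) := by
    have h := congrArg (Nat.cast (R := ℝ)) (Nat.choose_mul_succ_eq N k)
    push_cast [Nat.cast_sub hk] at h
    rw [eq_div_iff (by positivity), h]
  have hrising (x : ℝ) (hx : 0 < x) : rising (x + 1) k = rising x k * (x + k) / x := by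
    rw [eq_div_iff hx.ne', mul_comm, mul_rising_add_one]
  have hz : ((N + 1 : ℕ) : ℝ) + a + b - 1 = N + a + b := by push_cast; ring
  have hz' : ((N + 1 : ℕ) : ℝ) + (a + 1) + b - 1 = N + a + b + 1 := by push_cast; ring
  have hz'' : (N : ℝ) + (a + 1) + b - 1 = N + a + b := by ring
  simp only [jacobiCoeff, christoffelIncr, hz, hz', hz'', hrising a ha,
    hrising (N + a + b) (by positivity), christoffel_succ ha hb, hchoose]
  field_simp
  ring

lemma christoffel_mul_eval_jacobiPoly (N : ℕ) (u : ℝ) :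
    christoffel a b N * (jacobiPoly (a + 1) b N).eval u =
      ∑ j ∈ Finset.range (N + 1), christoffelIncr a b j * (jacobiPoly a b j).eval u := by
  induction N with
  | zero => simp [christoffelIncr, eval_jacobiPoly_degree_zero]
  | succ N ih =>
    rw [Finset.sum_range_succ, ← ih]
    have hpoly : christoffel a b (N + 1) • jacobiPoly (a + 1) b (N + 1) =
        christoffel a b N • jacobiPoly (a + 1) b N +
          christoffelIncr a b (N + 1) • jacobiPoly a b (N + 1) := by
      ext k
      simpa only [Polynomial.coeff_add, Polynomial.coeff_smul, smul_eq_mul, coeff_jacobiPoly]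
        using christoffel_mul_jacobiCoeff_succ ha hb N k
    simpa using congrArg (Polynomial.eval u) hpoly

end Christoffel

lemma sum_neg_one_pow_mul_choose_mul_eval {N : ℕ} {P : Polynomial ℝ} (hP : P.natDegree < N) :
    ∑ k ∈ Finset.range (N + 1), (-1 : ℝ) ^ k * (N.choose k : ℝ) * P.eval (k : ℝ) = 0 := by
  have h := congrFun (Polynomial.fwdDiff_iter_eq_zero_of_degree_lt hP) 0
  rw [fwdDiff_iter_eq_sum_shift] at h
  simp only [zero_add, nsmul_eq_mul, mul_one, Pi.zero_apply, zsmul_eq_mul] at h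
  have hsign : (-1 : ℝ) ^ N ≠ 0 := by positivity
  rw [← mul_eq_zero_iff_left hsign, ← h, Finset.mul_sum]
  refine Finset.sum_congr rfl fun k hk => ?_
  obtain ⟨m, rfl⟩ := Nat.exists_eq_add_of_le (Finset.mem_range_succ_iff.1 hk)
  have hk2 : ((-1 : ℝ) ^ k) * (-1) ^ k = 1 := by rw [← mul_pow]; simp
  push_cast
  rw [Nat.add_sub_cancel_left, pow_add]
  linear_combination (-1 : ℝ) ^ m * ((k + m).choose k) * P.eval (k : ℝ) * hk2

section Orthogonality

variable {a b : ℝ} (ha : 0 < a) (hb : 0 < b)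
include ha hb

lemma jacobiCoeff_mul_moment (j i k : ℕ) :
    jacobiCoeff a b (j + i + 1) k * (rising a (k + j) / rising (a + b) (k + j)) =
      (rising (a + b) (j + i))⁻¹ * ((-1) ^ k * ((j + i + 1).choose k : ℝ) *
        (rising (k + a) j * rising (k + (a + b + j)) i)) := by
  have hab := add_pos ha hb
  have := rising_pos ha k
  have := rising_pos hab (j + i)
  have := rising_pos hab (k + j)
  have hsplit : rising (a + b) (j + i) * rising (a + b + (j + i : ℕ)) k =
      rising (a + b) (k + j) * rising (k + (a + b + j)) i := by
    rw [← rising_add, show j + i + k = k + j + i by ring, rising_add]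
    push_cast
    ring_nf
  have hz : ((j + i + 1 : ℕ) : ℝ) + a + b - 1 = a + b + (j + i : ℕ) := by push_cast; ring
  rw [jacobiCoeff, hz, rising_add a k j, add_comm a (k : ℝ)]
  field_simp
  linear_combination ((j + i + 1).choose k : ℝ) * rising (k + a) j * hsplit

lemma integral_jacobiPoly_mul_pow {N j : ℕ} (hj : j < N) :
    ∫ u, (jacobiPoly a b N).eval u * u ^ j ∂betaMeasure a b = 0 := by
  obtain ⟨i, rfl⟩ := Nat.exists_eq_add_of_lt hj
  let P : Polynomial ℝ := (ascPochhammer ℝ j).comp (.X + .C a) *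
    (ascPochhammer ℝ i).comp (.X + .C (a + b + j))
  have hP : P.natDegree < j + i + 1 := by
    refine Nat.lt_succ_of_le (Polynomial.natDegree_mul_le.trans ?_)
    simp only [Polynomial.natDegree_comp, ascPochhammer_natDegree, Polynomial.natDegree_X_add_C,
      mul_one, le_refl]
  simp only [eval_jacobiPoly, Finset.sum_mul, mul_assoc, ← pow_add]
  rw [integral_finsetSum _ fun k _ => integrable_betaMeasure ha hb (by fun_prop)]
  simp only [integral_const_mul, integral_pow_betaMeasure ha hb, jacobiCoeff_mul_moment ha hb]
  rw [← Finset.mul_sum, ← mul_zero (rising (a + b) (j + i))⁻¹,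
    ← sum_neg_one_pow_mul_choose_mul_eval hP]
  simp [P, rising, Polynomial.eval_comp]

lemma integral_jacobiPoly_mul_of_natDegree_lt {N : ℕ} {h : Polynomial ℝ} (hh : h.natDegree < N) :
    ∫ u, (jacobiPoly a b N).eval u * h.eval u ∂betaMeasure a b = 0 := by
  simp only [Polynomial.eval_eq_sum_range' hh, Finset.mul_sum, mul_left_comm]
  rw [integral_finsetSum _ fun k _ => integrable_betaMeasure ha hb (by fun_prop)]
  refine Finset.sum_eq_zero fun k hk => ?_
  rw [integral_const_mul, integral_jacobiPoly_mul_pow ha hb (Finset.mem_range.1 hk), mul_zero]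

lemma christoffel_mul_integral_jacobiPoly (N : ℕ) :
    christoffel a b N * ∫ u, (jacobiPoly (a + 1) b N).eval u ∂betaMeasure a b = 1 := by
  have := isProbabilityMeasureBeta ha hb
  rw [← integral_const_mul]
  simp only [christoffel_mul_eval_jacobiPoly ha hb]
  rw [integral_finsetSum _ fun k _ => integrable_betaMeasure ha hb (by fun_prop),
    Finset.sum_range_succ', Finset.sum_eq_zero fun j _ => ?_]
  · simp [christoffelIncr, christoffel_zero, eval_jacobiPoly_degree_zero]
  · have h := integral_jacobiPoly_mul_pow ha hb (N := j + 1) (j := 0) j.succ_pos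
    simp only [pow_zero, mul_one] at h
    rw [integral_const_mul, h, mul_zero]

lemma christoffel_mul_integral_jacobiPoly_mul {N : ℕ} {h : Polynomial ℝ} (hh : h.natDegree ≤ N) :
    christoffel a b N * ∫ u, (jacobiPoly (a + 1) b N).eval u * h.eval u ∂betaMeasure a b =
      h.eval 0 := by
  have horth : ∫ u, u ^ 1 * ((jacobiPoly (a + 1) b N).eval u * h.divX.eval u)
      ∂betaMeasure a b = 0 := by
    rw [integral_pow_mul_betaMeasure ha hb, Nat.cast_one]
    rcases Nat.eq_zero_or_pos N with rfl | hN
    · rw [Polynomial.divX_eq_zero_iff.2 (Polynomial.eq_C_of_natDegree_le_zero hh)]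
      simp
    · have hdiv : h.divX.natDegree < N := by
        rw [Polynomial.natDegree_divX_eq_natDegree_tsub_one]
        omega
      rw [integral_jacobiPoly_mul_of_natDegree_lt (by positivity) hb hdiv, mul_zero]
  have hsplit (u : ℝ) : (jacobiPoly (a + 1) b N).eval u * h.eval u =
      u ^ 1 * ((jacobiPoly (a + 1) b N).eval u * h.divX.eval u) +
        h.eval 0 * (jacobiPoly (a + 1) b N).eval u := by
    nth_rw 1 [← Polynomial.X_mul_divX_add h]
    simp only [Polynomial.eval_add, Polynomial.eval_mul, Polynomial.eval_X, Polynomial.eval_C,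
      Polynomial.coeff_zero_eq_eval_zero]
    ring
  simp only [hsplit]
  rw [integral_add (integrable_betaMeasure ha hb (by fun_prop))
      (integrable_betaMeasure ha hb (by fun_prop)), horth, zero_add, integral_const_mul,
    mul_left_comm, christoffel_mul_integral_jacobiPoly ha hb, mul_one]

lemma integral_jacobiPoly_sq (N : ℕ) :
    ∫ u, (jacobiPoly (a + 1) b N).eval u ^ 2 ∂betaMeasure a b = (christoffel a b N)⁻¹ := by
  simp only [sq]
  rw [← mul_right_inj' (christoffel_pos ha hb N).ne', mul_inv_cancel₀ (christoffel_pos ha hb N).ne',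
    christoffel_mul_integral_jacobiPoly_mul ha hb (natDegree_jacobiPoly_le _ _ _),
    eval_jacobiPoly_zero]

end Orthogonality

lemma integral_sum_mul_sq_le {X ι : Type*} [MeasurableSpace X] {μ : Measure X} (s : Finset ι)
    {t B : ι → ℝ} {f : ι → X → ℝ} (ht : ∀ i ∈ s, 0 ≤ t i) (hB : ∀ i ∈ s, 0 < B i)
    (hf : ∀ i ∈ s, Integrable (fun x => f i x ^ 2) μ)
    (hfB : ∀ i ∈ s, ∫ x, f i x ^ 2 ∂μ ≤ B i ^ 2) :
    ∫ x, (∑ i ∈ s, t i * f i x) ^ 2 ∂μ ≤ (∑ i ∈ s, t i * B i) ^ 2 := by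
  have hA : 0 ≤ ∑ i ∈ s, t i * B i :=
    Finset.sum_nonneg fun i hi => mul_nonneg (ht i hi) (hB i hi).le
  have hpointwise (x : X) : (∑ i ∈ s, t i * f i x) ^ 2 ≤
      (∑ i ∈ s, t i * B i) * ∑ i ∈ s, t i / B i * f i x ^ 2 := by
    refine Finset.sum_sq_le_sum_mul_sum_of_sq_le_mul s
      (fun i hi => mul_nonneg (ht i hi) (hB i hi).le)
      (fun i hi => mul_nonneg (div_nonneg (ht i hi) (hB i hi).le) (sq_nonneg _))
      (fun i hi => le_of_eq ?_)
    have := hB i hi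
    field_simp
  have hint (i) (hi : i ∈ s) : Integrable (fun x => t i / B i * f i x ^ 2) μ :=
    (hf i hi).const_mul _
  calc ∫ x, (∑ i ∈ s, t i * f i x) ^ 2 ∂μ
      ≤ ∫ x, (∑ i ∈ s, t i * B i) * ∑ i ∈ s, t i / B i * f i x ^ 2 ∂μ :=
        integral_mono_of_nonneg (.of_forall fun x => sq_nonneg _)
          ((integrable_finsetSum s hint).const_mul _) (.of_forall hpointwise)
    _ = (∑ i ∈ s, t i * B i) * ∑ i ∈ s, t i / B i * ∫ x, f i x ^ 2 ∂μ := by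
        rw [integral_const_mul, integral_finsetSum s hint]
        simp only [integral_const_mul]
    _ ≤ (∑ i ∈ s, t i * B i) * ∑ i ∈ s, t i / B i * B i ^ 2 := by
        gcongr with i hi
        · exact div_nonneg (ht i hi) (hB i hi).le
        · exact hfB i hi
    _ = (∑ i ∈ s, t i * B i) ^ 2 := by
        rw [sq]
        congr 1
        refine Finset.sum_congr rfl fun i hi => ?_
        have := hB i hi
        field_simp

lemma christoffel_mul_succ_le {a a' b : ℝ} (ha : 0 < a) (hb : 0 < b) (haa' : a ≤ a') (N : ℕ) :
    christoffel a' b N * christoffel a b (N + 1) ≤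
      christoffel a' b (N + 1) * christoffel a b N := by
  have ha' := ha.trans_le haa'
  have := christoffel_pos ha hb N
  have := christoffel_pos ha' hb N
  rw [christoffel_succ ha hb, christoffel_succ ha' hb]
  calc _ = christoffel a' b N * christoffel a b N * ((N + a + b) * (N + a + 1)) /
        ((N + 1) * (N + b)) := by ring
    _ ≤ christoffel a' b N * christoffel a b N * ((N + a' + b) * (N + a' + 1)) /
        ((N + 1) * (N + b)) := by gcongr
    _ = _ := by ring

lemma sum_christoffelIncr_div_sqrt_le {a a' b : ℝ} (ha : 0 < a) (hb : 0 < b) (haa' : a ≤ a')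
    (N : ℕ) :
    ∑ j ∈ Finset.range (N + 1), christoffelIncr a' b j / √(christoffel a b j) ≤
      2 * christoffel a' b N / √(christoffel a b N) := by
  have ha' := ha.trans_le haa'
  induction N with
  | zero => simp [christoffelIncr, christoffel_zero]
  | succ N ih =>
    have hS := christoffel_pos ha hb N
    have hS' := christoffel_pos ha hb (N + 1)
    have hT := christoffel_pos ha' hb N
    have := christoffel_pos ha' hb (N + 1)
    have hcompare : 2 * christoffel a' b N / √(christoffel a b N) ≤
        (christoffel a' b (N + 1) + christoffel a' b N) / √(christoffel a b (N + 1)) := by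
      rw [div_le_div_iff₀ (by positivity) (by positivity)]
      refine le_of_sq_le_sq ?_ (by positivity)
      simp only [mul_pow, Real.sq_sqrt hS.le, Real.sq_sqrt hS'.le]
      nlinarith [mul_le_mul_of_nonneg_left (christoffel_mul_succ_le ha hb haa' N) hT.le,
        mul_nonneg (sq_nonneg (christoffel a' b (N + 1) - christoffel a' b N)) hS.le]
    calc _ ≤ (christoffel a' b (N + 1) + christoffel a' b N) / √(christoffel a b (N + 1)) +
          (christoffel a' b (N + 1) - christoffel a' b N) / √(christoffel a b (N + 1)) := by
          rw [Finset.sum_range_succ]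
          exact add_le_add (ih.trans hcompare) le_rfl
      _ = 2 * christoffel a' b (N + 1) / √(christoffel a b (N + 1)) := by ring

lemma integral_jacobiPoly_add_one_sq_le {a a' b M : ℝ} (ha : 0 < a) (hb : 0 < b) (haa' : a ≤ a')
    (hM : 0 < M)
    (h : ∀ N, ∫ u, (jacobiPoly a' b N).eval u ^ 2 ∂betaMeasure a b ≤ M / christoffel a b N)
    (N : ℕ) :
    ∫ u, (jacobiPoly (a' + 1) b N).eval u ^ 2 ∂betaMeasure a b ≤ 4 * M / christoffel a b N := by
  have ha' := ha.trans_le haa'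
  have hS := christoffel_pos ha hb
  have hT := christoffel_pos ha' hb N
  have hincr := christoffelIncr_nonneg ha' hb
  have hB (j : ℕ) : 0 < √M / √(christoffel a b j) := by
    have := hS j
    positivity
  have hsq (j : ℕ) : (√M / √(christoffel a b j)) ^ 2 = M / christoffel a b j := by
    rw [div_pow, Real.sq_sqrt hM.le, Real.sq_sqrt (hS j).le]
  refine le_of_mul_le_mul_left ?_ (sq_pos_of_pos hT)
  calc christoffel a' b N ^ 2 * ∫ u, (jacobiPoly (a' + 1) b N).eval u ^ 2 ∂betaMeasure a b
      = ∫ u, (∑ j ∈ Finset.range (N + 1), christoffelIncr a' b j * (jacobiPoly a' b j).eval u) ^ 2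
          ∂betaMeasure a b := by
        simp only [← christoffel_mul_eval_jacobiPoly ha' hb, mul_pow, integral_const_mul]
    _ ≤ (∑ j ∈ Finset.range (N + 1), christoffelIncr a' b j * (√M / √(christoffel a b j))) ^ 2 :=
        integral_sum_mul_sq_le _ (fun j _ => hincr j) (fun j _ => hB j)
          (fun j _ => integrable_betaMeasure ha hb (by fun_prop))
          fun j _ => (h j).trans_eq (hsq j).symm
    _ = (√M * ∑ j ∈ Finset.range (N + 1), christoffelIncr a' b j / √(christoffel a b j)) ^ 2 := by
        rw [Finset.mul_sum]
        simp only [mul_div_left_comm]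
    _ ≤ (√M * (2 * christoffel a' b N / √(christoffel a b N))) ^ 2 := by
        have hsum := sum_christoffelIncr_div_sqrt_le ha hb haa' N
        gcongr
        exact mul_nonneg (by positivity)
          (Finset.sum_nonneg fun j _ => div_nonneg (hincr j) (by positivity))
    _ = christoffel a' b N ^ 2 * (4 * M / christoffel a b N) := by
        rw [mul_pow, div_pow, mul_pow, Real.sq_sqrt hM.le, Real.sq_sqrt (hS N).le]
        ring

lemma integral_jacobiPoly_add_natCast_sq_le {a b : ℝ} (ha : 0 < a) (hb : 0 < b) (m N : ℕ) :
    ∫ u, (jacobiPoly (a + m + 1) b N).eval u ^ 2 ∂betaMeasure a b ≤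
      4 ^ m / christoffel a b N := by
  induction m generalizing N with
  | zero => simpa using (integral_jacobiPoly_sq ha hb N).le
  | succ m ih =>
    have haa' : a ≤ a + m + 1 := by linarith [Nat.cast_nonneg (α := ℝ) m]
    rw [Nat.cast_succ, ← add_assoc, pow_succ']
    exact integral_jacobiPoly_add_one_sq_le ha hb haa' (by positivity) ih N

lemma Gamma_add_le_mul_rpow {x θ : ℝ} (hx : 0 < x) (h0 : 0 ≤ θ) (h1 : θ ≤ 1) :
    Real.Gamma (x + θ) ≤ Real.Gamma x * x ^ θ := by
  rcases h0.eq_or_lt with rfl | h0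
  · simp
  rcases h1.eq_or_lt with rfl | h1
  · rw [Real.Gamma_add_one hx.ne', Real.rpow_one, mul_comm]
  have hΓ := Real.Gamma_pos_of_pos hx
  have h := Real.Gamma_mul_add_mul_le_rpow_Gamma_mul_rpow_Gamma (s := x) (t := x + 1)
    (a := 1 - θ) (b := θ) hx (by positivity) (by linarith) h0 (by ring)
  rw [show (1 - θ) * x + θ * (x + 1) = x + θ by ring] at h
  refine h.trans_eq ?_
  rw [Real.Gamma_add_one hx.ne', Real.mul_rpow hx.le hΓ.le, mul_left_comm, ← Real.rpow_add hΓ]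
  simp [mul_comm]

lemma Gamma_mul_rpow_le {x θ : ℝ} (hx : 0 < x + θ - 1) (h0 : 0 ≤ θ) (h1 : θ ≤ 1) :
    Real.Gamma x * (x + θ - 1) ^ θ ≤ Real.Gamma (x + θ) := by
  have h := Gamma_add_le_mul_rpow hx (sub_nonneg.2 h1) (sub_le_self 1 h0)
  rw [show x + θ - 1 + (1 - θ) = x by ring] at h
  calc Real.Gamma x * (x + θ - 1) ^ θ
      ≤ Real.Gamma (x + θ - 1) * (x + θ - 1) ^ (1 - θ) * (x + θ - 1) ^ θ := by gcongr
    _ = Real.Gamma (x + θ) := by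
      rw [mul_assoc, ← Real.rpow_add hx, sub_add_cancel, Real.rpow_one, mul_comm,
        ← Real.Gamma_add_one hx.ne', sub_add_cancel]

lemma christoffel_div_beta {a b : ℝ} (ha : 0 < a) (hb : 0 < b) (N : ℕ) :
    christoffel a b N / beta a b = Real.Gamma (a + b + N) * Real.Gamma (a + 1 + N) /
      (Real.Gamma a * Real.Gamma (a + 1) * (N.factorial * Real.Gamma (b + N))) := by
  have := rising_pos hb N
  rw [Gamma_add_natCast (by positivity), Gamma_add_natCast (by positivity), Gamma_add_natCast hb,
    christoffel, beta]
  field_simp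

lemma christoffel_div_beta_sub_one {a b : ℝ} (ha : 1 < a) (hb : 0 < b) (N : ℕ) :
    christoffel a b N / beta a b = christoffel (a - 1) b N / beta (a - 1) b *
      ((a + b + N - 1) * (a + N) / ((a - 1) * a)) := by
  have ha' : 0 < a - 1 := sub_pos.2 ha
  have ha0 : 0 < a := by linarith
  have haN : 0 < a + N := by positivity
  have habN : 0 < a + b + N - 1 := by linarith [Nat.cast_nonneg (α := ℝ) N]
  rw [christoffel_div_beta ha0 hb, christoffel_div_beta ha' hb, sub_add_cancel,
    show a + b + N = a + b + N - 1 + 1 by ring, Real.Gamma_add_one habN.ne',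
    show a + 1 + N = a + N + 1 by ring, Real.Gamma_add_one haN.ne', Real.Gamma_add_one ha0.ne',
    show a - 1 + b + N = a + b + N - 1 by ring]
  have hΓ : Real.Gamma a = (a - 1) * Real.Gamma (a - 1) := by
    rw [← Real.Gamma_add_one ha'.ne', sub_add_cancel]
  have := Real.Gamma_pos_of_pos ha'
  have := Real.Gamma_pos_of_pos habN
  have := Real.Gamma_pos_of_pos haN
  have := Real.Gamma_pos_of_pos (show 0 < b + N by positivity)
  rw [hΓ]
  field_simp
  ring_nf

lemma christoffel_div_beta_mul_rpow_le {x b θ : ℝ} (hx : 0 < x) (hb : 0 < b) (h0 : 0 ≤ θ)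
    (h1 : θ ≤ 1) (hxθ : 1 < x + θ) (N : ℕ) :
    christoffel x b N / beta x b *
        ((x + θ + b + N - 1) * (x + θ + N) / (x * (x + 1))) ^ θ ≤
      christoffel (x + θ) b N / beta (x + θ) b := by
  have : (0 : ℝ) ≤ N := Nat.cast_nonneg N
  have hp : 0 < x + b + N + θ - 1 := by linarith
  have hq : 0 < x + 1 + N + θ - 1 := by linarith
  have hsplit : ((x + θ + b + N - 1) * (x + θ + N) / (x * (x + 1))) ^ θ =
      (x + b + N + θ - 1) ^ θ * (x + 1 + N + θ - 1) ^ θ / (x ^ θ * (x + 1) ^ θ) := by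
    rw [← Real.mul_rpow hp.le hq.le, ← Real.mul_rpow (by positivity) (by positivity),
      ← Real.div_rpow (by positivity) (by positivity)]
    ring_nf
  rw [christoffel_div_beta hx hb, christoffel_div_beta (by positivity) hb, hsplit]
  calc _ = Real.Gamma (x + b + N) * (x + b + N + θ - 1) ^ θ *
        (Real.Gamma (x + 1 + N) * (x + 1 + N + θ - 1) ^ θ) /
        (Real.Gamma x * x ^ θ * (Real.Gamma (x + 1) * (x + 1) ^ θ) *
          (N.factorial * Real.Gamma (b + N))) := by
        rw [div_mul_div_comm]
        ring_nf
    _ ≤ Real.Gamma (x + b + N + θ) * Real.Gamma (x + 1 + N + θ) /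
        (Real.Gamma (x + θ) * Real.Gamma (x + 1 + θ) * (N.factorial * Real.Gamma (b + N))) := by
        have := Real.Gamma_pos_of_pos (show 0 < b + N by positivity)
        have := Real.Gamma_pos_of_pos (show 0 < x + θ by positivity)
        have := Real.Gamma_pos_of_pos (show 0 < x + 1 + θ by positivity)
        have := Real.Gamma_pos_of_pos (show 0 < x + b + N + θ by positivity)
        have := Real.Gamma_pos_of_pos (show 0 < x + 1 + N + θ by positivity)
        gcongr ?_ * ?_ / (?_ * ?_ * _)
        · exact Gamma_mul_rpow_le hp h0 h1
        · exact Gamma_mul_rpow_le hq h0 h1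
        · exact Gamma_add_le_mul_rpow hx h0 h1
        · exact Gamma_add_le_mul_rpow (by positivity) h0 h1
    _ = _ := by ring_nf

lemma beta_mul_integral_betaMeasure_le {x b θ ρ : ℝ} (hx : 0 < x) (hb : 0 < b) (h0 : 0 ≤ θ)
    (h1 : θ ≤ 1) (hxθ : 1 < x + θ) (hρ : 0 < ρ) {f : ℝ → ℝ} (hf : Continuous f)
    (hf0 : ∀ u, 0 ≤ f u) :
    beta x b * ∫ u, f u ∂betaMeasure x b ≤
      ρ ^ θ * ((1 - θ) * (beta (x + θ) b * ∫ u, f u ∂betaMeasure (x + θ) b) +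
        θ * ρ⁻¹ * (beta (x + θ - 1) b * ∫ u, f u ∂betaMeasure (x + θ - 1) b)) := by
  set y := x + θ - 1
  have hy0 : 0 < y := by linarith
  have hβ := beta_pos hy0 hb
  have hshift {s : ℝ} (hs : 0 < y + s) : beta (y + s) b * ∫ u, f u ∂betaMeasure (y + s) b =
      beta y b * ∫ u, u ^ s * f u ∂betaMeasure y b := by
    have h := integral_betaMeasure_add hy0 hb hs (t := 0) (by simpa using hb) f
    simp only [Real.rpow_zero, mul_one, add_zero] at h
    rw [h, ← mul_assoc, mul_div_cancel₀ _ hβ.ne']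
  have hyx : x = y + (1 - θ) := by ring
  have hyθ : x + θ = y + 1 := by ring
  rw [hyθ, hshift (by positivity), hyx, hshift (hyx ▸ hx)]
  have hint {g : ℝ → ℝ} (hg : Continuous g) : Integrable g (betaMeasure y b) :=
    integrable_betaMeasure hy0 hb hg
  have hpointwise {u : ℝ} (hu : 0 < u) :
      u ^ (1 - θ) * f u ≤ ρ ^ θ * ((1 - θ) * (u ^ (1 : ℝ) * f u) + θ * ρ⁻¹ * f u) := by
    have hamgm := Real.geom_mean_le_arith_mean2_weighted (sub_nonneg.2 h1) h0 hu.le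
      (inv_pos.2 hρ).le (sub_add_cancel 1 θ)
    rw [Real.inv_rpow hρ.le, ← div_eq_mul_inv, div_le_iff₀' (by positivity)] at hamgm
    refine (mul_le_mul_of_nonneg_right hamgm (hf0 u)).trans_eq ?_
    rw [Real.rpow_one]
    ring
  calc beta y b * ∫ u, u ^ (1 - θ) * f u ∂betaMeasure y b
      ≤ beta y b * ∫ u, ρ ^ θ * ((1 - θ) * (u ^ (1 : ℝ) * f u) + θ * ρ⁻¹ * f u)
          ∂betaMeasure y b := by
        refine mul_le_mul_of_nonneg_left (integral_mono_of_nonneg ?_ ?_ ?_) hβ.le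
        · filter_upwards [ae_mem_Ioo_betaMeasure y b] with u hu
          exact mul_nonneg (Real.rpow_nonneg hu.1.le _) (hf0 u)
        · exact hint (by simp only [Real.rpow_one]; fun_prop)
        · filter_upwards [ae_mem_Ioo_betaMeasure y b] with u hu using hpointwise hu.1
    _ = _ := by
        rw [integral_const_mul, integral_add, integral_const_mul, integral_const_mul]
        · ring
        · exact hint (by simp only [Real.rpow_one]; fun_prop)
        · exact hint (by fun_prop)

lemma christoffel_div_beta_le {x b θ : ℝ} (hx : 0 < x) (hb : 0 < b) (hxθ : x ≤ 3 * (x + θ - 1))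
    (h0 : 0 ≤ θ) (N : ℕ) :
    christoffel (x + θ) b N / beta (x + θ) b ≤
      9 * ((x + θ + b + N - 1) * (x + θ + N) / (x * (x + 1))) *
        (christoffel (x + θ - 1) b N / beta (x + θ - 1) b) := by
  have hy : 0 < x + θ - 1 := by linarith
  have hp : 0 < x + θ + b + N - 1 := by linarith [Nat.cast_nonneg (α := ℝ) N]
  rw [christoffel_div_beta_sub_one (by linarith) hb, mul_comm]
  have := christoffel_pos hy hb N
  have := beta_pos hy hb
  have hnum : 0 ≤ (x + θ + b + N - 1) * (x + θ + N) := by positivity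
  have hden : x * (x + 1) ≤ 9 * ((x + θ - 1) * (x + θ)) := by nlinarith
  gcongr
  rw [mul_div_assoc', div_le_div_iff₀ (by positivity) (by positivity)]
  linarith [mul_le_mul_of_nonneg_left hden hnum]

lemma beta_mul_integral_jacobiPoly_sq_le {a b : ℝ} (ha : 0 < a) (hb : 0 < b) (m N : ℕ) :
    beta a b * ∫ u, (jacobiPoly (a + m + 1) b N).eval u ^ 2 ∂betaMeasure a b ≤
      4 ^ m / (christoffel a b N / beta a b) := by
  rw [div_div_eq_mul_div, mul_comm, mul_div_right_comm]
  exact mul_le_mul_of_nonneg_right (integral_jacobiPoly_add_natCast_sq_le ha hb m N)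
    (beta_pos ha hb).le

/- Interpolation between the parameters `x + θ` and `x + θ - 1`, where
`integral_jacobiPoly_add_natCast_sq_le` applies. -/
lemma beta_mul_integral_jacobiPoly_add_sq_le {x b θ : ℝ} (hx : 0 < x) (hb : 0 < b) (h0 : 0 ≤ θ)
    (h1 : θ ≤ 1) (hxθ : x ≤ 3 * (x + θ - 1)) (m N : ℕ) :
    beta x b * ∫ u, (jacobiPoly (x + θ + m + 1) b N).eval u ^ 2 ∂betaMeasure x b ≤
      ((x + θ + b + N - 1) * (x + θ + N) / (x * (x + 1))) ^ θ *
        (9 * 4 ^ (m + 1) / (christoffel (x + θ) b N / beta (x + θ) b)) := by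
  have hy : 0 < x + θ - 1 := by linarith
  have ha : 0 < x + θ := by positivity
  have hp : 0 < x + θ + b + N - 1 := by linarith [Nat.cast_nonneg (α := ℝ) N]
  set q : ℝ → ℝ := fun u => (jacobiPoly (x + θ + m + 1) b N).eval u ^ 2
  set ρ := (x + θ + b + N - 1) * (x + θ + N) / (x * (x + 1))
  set S := christoffel (x + θ) b N / beta (x + θ) b
  set S' := christoffel (x + θ - 1) b N / beta (x + θ - 1) b
  have hS : 0 < S := div_pos (christoffel_pos ha hb N) (beta_pos ha hb)
  have hS' : 0 < S' := div_pos (christoffel_pos hy hb N) (beta_pos hy hb)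
  have hρ : 0 < ρ := by positivity
  have hSS' : S ≤ 9 * ρ * S' := christoffel_div_beta_le hx hb hxθ h0 N
  have hinv : ρ⁻¹ * (4 ^ (m + 1) / S') ≤ 9 * 4 ^ (m + 1) / S := by
    rw [inv_mul_eq_div, div_div, div_le_div_iff₀ (by positivity) hS]
    nlinarith [mul_le_mul_of_nonneg_left hSS' (show (0 : ℝ) ≤ 4 ^ (m + 1) by positivity)]
  have hq : beta (x + θ) b * ∫ u, q u ∂betaMeasure (x + θ) b ≤ 9 * 4 ^ (m + 1) / S := by
    refine (beta_mul_integral_jacobiPoly_sq_le ha hb m N).trans ?_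
    gcongr
    linarith [show (4 : ℝ) ^ (m + 1) = 4 * 4 ^ m from pow_succ' 4 m,
      show (0 : ℝ) < 4 ^ m by positivity]
  have hq' : beta (x + θ - 1) b * ∫ u, q u ∂betaMeasure (x + θ - 1) b ≤ 4 ^ (m + 1) / S' := by
    have h := beta_mul_integral_jacobiPoly_sq_le hy hb (m + 1) N
    rwa [show x + θ - 1 + ((m + 1 : ℕ) : ℝ) + 1 = x + θ + m + 1 by push_cast; ring] at h
  have := sub_nonneg.2 h1
  calc _ ≤ ρ ^ θ * ((1 - θ) * (beta (x + θ) b * ∫ u, q u ∂betaMeasure (x + θ) b) +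
        θ * ρ⁻¹ * (beta (x + θ - 1) b * ∫ u, q u ∂betaMeasure (x + θ - 1) b)) :=
        beta_mul_integral_betaMeasure_le hx hb h0 h1 (by linarith) hρ (by fun_prop)
          fun u => sq_nonneg _
    _ ≤ ρ ^ θ * ((1 - θ) * (9 * 4 ^ (m + 1) / S) + θ * (9 * 4 ^ (m + 1) / S)) := by
        rw [mul_assoc θ]
        gcongr ?_ * (?_ * ?_ + ?_ * ?_)
        exact (mul_le_mul_of_nonneg_left hq' (inv_pos.2 hρ).le).trans hinv
    _ = _ := by ring

lemma integral_jacobiPoly_add_sq_le {x b θ : ℝ} (hx : 0 < x) (hb : 0 < b) (h0 : 0 ≤ θ)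
    (h1 : θ ≤ 1) (hxθ : x ≤ 3 * (x + θ - 1)) (m N : ℕ) :
    ∫ u, (jacobiPoly (x + θ + m + 1) b N).eval u ^ 2 ∂betaMeasure x b ≤
      9 * 4 ^ (m + 1) / christoffel x b N := by
  have hinterp := beta_mul_integral_jacobiPoly_add_sq_le hx hb h0 h1 hxθ m N
  have ha : 0 < x + θ := by positivity
  have hcx := christoffel_pos hx hb N
  have hβx := beta_pos hx hb
  have hS : 0 < christoffel (x + θ) b N / beta (x + θ) b :=
    div_pos (christoffel_pos ha hb N) (beta_pos ha hb)
  set I := ∫ u, (jacobiPoly (x + θ + m + 1) b N).eval u ^ 2 ∂betaMeasure x b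
  set ρ := (x + θ + b + N - 1) * (x + θ + N) / (x * (x + 1))
  set S := christoffel (x + θ) b N / beta (x + θ) b
  rw [le_div_iff₀ hcx]
  refine le_of_mul_le_mul_right ?_ hS
  calc I * christoffel x b N * S
      = christoffel x b N / beta x b * (beta x b * I) * S := by field_simp
    _ ≤ christoffel x b N / beta x b * (ρ ^ θ * (9 * 4 ^ (m + 1) / S)) * S := by gcongr
    _ = christoffel x b N / beta x b * ρ ^ θ * (9 * 4 ^ (m + 1)) := by field_simp
    _ ≤ S * (9 * 4 ^ (m + 1)) := by
        gcongr
        exact christoffel_div_beta_mul_rpow_le hx hb h0 h1 (by linarith) N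
    _ = 9 * 4 ^ (m + 1) * S := mul_comm _ _

/-! ### The kernels in terms of Jacobi polynomials -/

section Jacobi

variable {α β : ℝ}

lemma christoffelIncr_eq {a b : ℝ} (ha : 0 < a) (hb : 0 < b) (hab : 0 < a + b - 1) (j : ℕ) :
    christoffelIncr a b j = (2 * j + a + b - 1) / (a + b - 1) *
      (rising (a + b - 1) j * rising a j / (j.factorial * rising b j)) := by
  cases j with
  | zero => simp [christoffelIncr, christoffel_zero, rising_zero, hab.ne']
  | succ j =>
    have hrising (x : ℝ) : rising x (j + 1) = x * rising (x + 1) j := by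
      rw [mul_rising_add_one, rising_succ]
    have := rising_pos hb j
    rw [christoffelIncr, christoffel_succ ha hb, christoffel, hrising, hrising a,
      rising_succ b, sub_add_cancel, Nat.factorial_succ]
    push_cast
    field_simp
    ring

lemma jacobiP_one_eq (n : ℕ) : jacobiP α β n 1 =
    √((2 * n + α + β + 1) / 2 ^ (α + β + 1) *
      (Real.Gamma (n + α + β + 1) * n.factorial /
        (Real.Gamma (n + α + 1) * Real.Gamma (n + β + 1)))) *
    (Real.Gamma (α + n + 1) / (n.factorial * Real.Gamma (α + β + n + 1))) *
    (Real.Gamma (α + β + n + 1) / Real.Gamma (α + 1)) := by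
  rw [jacobiP, Finset.sum_eq_single_of_mem 0 (by simp) fun k _ hk => by simp [hk]]
  simp

lemma jacobiP_eq (hα : 0 < α + 1) (hαβ : 0 < α + β + 1) (n : ℕ) (x : ℝ) :
    jacobiP α β n x =
      jacobiP α β n 1 * (jacobiPoly (α + 1) (β + 1) n).eval ((1 - x) / 2) := by
  have hn : 0 < α + β + n + 1 := by linarith [Nat.cast_nonneg (α := ℝ) n]
  rw [jacobiP_one_eq, jacobiP, mul_assoc _ (_ / Real.Gamma (α + 1)), eval_jacobiPoly]
  congr 1
  rw [Finset.mul_sum]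
  refine Finset.sum_congr rfl fun k _ => ?_
  have := rising_pos hα k
  have := Real.Gamma_pos_of_pos hα
  rw [jacobiCoeff, add_right_comm _ (k : ℝ), add_right_comm α k, Gamma_add_natCast hn,
    Gamma_add_natCast hα, show (n : ℝ) + (α + 1) + (β + 1) - 1 = α + β + n + 1 by ring,
    show (x - 1) / 2 = -1 * ((1 - x) / 2) by ring, mul_pow]
  field_simp

variable (hα : 0 < α + 1) (hβ : 0 < β + 1) (hαβ : 0 < α + β + 1)
include hα hβ hαβ

lemma jacobiP_one_pos (n : ℕ) : 0 < jacobiP α β n 1 := by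
  have : (0 : ℝ) ≤ n := Nat.cast_nonneg n
  have := Real.Gamma_pos_of_pos hα
  have := Real.Gamma_pos_of_pos (show 0 < n + α + 1 by linarith)
  have := Real.Gamma_pos_of_pos (show 0 < n + β + 1 by linarith)
  have := Real.Gamma_pos_of_pos (show 0 < n + α + β + 1 by linarith)
  have : 0 < 2 * n + α + β + 1 := by linarith
  rw [jacobiP_one_eq, show α + β + n + 1 = n + α + β + 1 by ring,
    show α + n + 1 = n + α + 1 by ring]
  positivity

lemma jacobiP_one_sq (n : ℕ) :
    jacobiP α β n 1 ^ 2 =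
      christoffelIncr (α + 1) (β + 1) n / (2 ^ (α + β + 1) * beta (α + 1) (β + 1)) := by
  have : (0 : ℝ) ≤ n := Nat.cast_nonneg n
  have := Real.Gamma_pos_of_pos hα
  have := Real.Gamma_pos_of_pos hβ
  have := Real.Gamma_pos_of_pos hαβ
  have := rising_pos hα n
  have := rising_pos hβ n
  have := rising_pos hαβ n
  have : 0 < 2 * n + α + β + 1 := by linarith
  rw [jacobiP_one_eq, christoffelIncr_eq hα hβ (by linarith),
    show α + β + n + 1 = α + β + 1 + n by ring, show (n : ℝ) + α + β + 1 = α + β + 1 + n by ring,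
    show α + n + 1 = α + 1 + n by ring, show (n : ℝ) + α + 1 = α + 1 + n by ring,
    show (n : ℝ) + β + 1 = β + 1 + n by ring, Gamma_add_natCast hα, Gamma_add_natCast hβ,
    Gamma_add_natCast hαβ, show α + 1 + (β + 1) - 1 = α + β + 1 by ring, beta,
    show α + 1 + (β + 1) = α + β + 1 + 1 by ring, Real.Gamma_add_one hαβ.ne', mul_pow, mul_pow,
    Real.sq_sqrt (by positivity)]
  field_simp
  ring

lemma jacobiK_succ_eq (N : ℕ) (x : ℝ) :
    jacobiK α β (N + 1) x =
      christoffel (α + 1) (β + 1) N * (jacobiPoly (α + 2) (β + 1) N).eval ((1 - x) / 2) /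
        (2 ^ (α + β + 1) * beta (α + 1) (β + 1)) := by
  rw [show α + 2 = α + 1 + 1 by ring, christoffel_mul_eval_jacobiPoly hα hβ, Finset.sum_div,
    jacobiK]
  refine Finset.sum_congr rfl fun j _ => ?_
  rw [jacobiP_eq hα hαβ j x, ← mul_assoc, ← sq, jacobiP_one_sq hα hβ hαβ]
  ring

lemma jacobiP_div_jacobiP_one (n : ℕ) (x : ℝ) :
    jacobiP α β n x / jacobiP α β n 1 =
      (jacobiPoly (α + 1) (β + 1) n).eval ((1 - x) / 2) := by
  rw [jacobiP_eq hα hαβ n x, mul_div_cancel_left₀ _ (jacobiP_one_pos hα hβ hαβ n).ne']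

end Jacobi

lemma omegaS_div_omegaS_pred {d : ℕ} (hd : 1 ≤ d) :
    omegaS d / omegaS (d - 1) = 2 ^ ((d : ℝ) - 1) * beta ((d : ℝ) / 2) ((d : ℝ) / 2) := by
  have hd0 : (0 : ℝ) < d := Nat.cast_pos.2 hd
  have hdup := Real.Gamma_mul_Gamma_add_half ((d : ℝ) / 2)
  rw [mul_div_cancel₀ _ two_ne_zero, ← add_div] at hdup
  have := Real.Gamma_pos_of_pos hd0
  have := Real.Gamma_pos_of_pos (half_pos hd0)
  have := Real.Gamma_pos_of_pos (show (0 : ℝ) < (d + 1) / 2 by positivity)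
  have hpi : π ^ (((d : ℝ) + 1) / 2) = π ^ ((d : ℝ) / 2) * √π := by
    rw [Real.sqrt_eq_rpow, ← Real.rpow_add Real.pi_pos, add_div]
  have htwo : (2 : ℝ) ^ (1 - (d : ℝ)) = (2 ^ ((d : ℝ) - 1))⁻¹ := by
    rw [← Real.rpow_neg two_pos.le, neg_sub]
  rw [htwo] at hdup
  rw [omegaS, omegaS, beta, Nat.cast_sub hd, Nat.cast_one, sub_add_cancel, add_halves, hpi]
  field_simp at hdup ⊢
  linear_combination -hdup

lemma sphK_succ_eq {d : ℕ} (hd : 2 ≤ d) (N : ℕ) (x : ℝ) :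
    sphK d (N + 1) x = christoffel (d / 2) (d / 2) N *
      (jacobiPoly (d / 2 + 1) (d / 2) N).eval ((1 - x) / 2) := by
  have hd' : (2 : ℝ) ≤ d := by exact_mod_cast hd
  have := beta_pos (show (0 : ℝ) < d / 2 by positivity) (show (0 : ℝ) < d / 2 by positivity)
  rw [sphK, omegaS_div_omegaS_pred (by omega),
    jacobiK_succ_eq (by linarith) (by linarith) (by linarith), sub_add_cancel,
    show (d : ℝ) / 2 - 1 + 2 = d / 2 + 1 by ring,
    show (d : ℝ) / 2 - 1 + (d / 2 - 1) + 1 = d - 1 by ring]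
  field_simp

lemma PhiTilde_eq {d n : ℕ} (hd : 3 ≤ d) {r : ℝ} (hr : 0 ≤ r) (x : ℝ) :
    PhiTilde d n r x = sphK d ((d + 2) * n) x *
      (jacobiPoly (d / 2 + r + 1) (d / 2 - 1) (d * n)).eval ((1 - x) / 2) := by
  have hd' : (3 : ℝ) ≤ d := by exact_mod_cast hd
  rw [PhiTilde, jacobiP_div_jacobiP_one (by linarith) (by linarith) (by linarith),
    show (d : ℝ) / 2 - 2 + 1 = d / 2 - 1 by ring]

lemma christoffel_half_half (k M : ℕ) :
    christoffel ((k + 1 : ℝ) / 2) ((k + 1 : ℝ) / 2) M =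
      rising (M + 1) k / k.factorial * ((2 * M + k + 1) / (k + 1)) := by
  have := rising_pos (show (0 : ℝ) < (k + 1) / 2 by positivity) M
  have hrising := mul_rising_add_one ((k + 1 : ℝ) / 2) M
  have hfac := factorial_mul_rising_succ k M
  rw [christoffel, add_halves, eq_div_of_mul_eq (by positivity) ((mul_comm _ _).trans hrising),
    eq_div_of_mul_eq (by positivity) ((mul_comm _ _).trans hfac)]
  field_simp
  ring

lemma christoffel_half_half_sub_one {j : ℕ} (hj : 0 < j) (N : ℕ) :
    christoffel ((j + 2 : ℝ) / 2) ((j + 2 : ℝ) / 2 - 1) N =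
      rising (N + 1) j / j.factorial * ((2 * N + j + 2) * (2 * N + j) / ((j + 2) * j)) := by
  have : (0 : ℝ) < j := Nat.cast_pos.2 hj
  have := rising_pos (show (0 : ℝ) < j / 2 by positivity) N
  have hrising := mul_rising_add_one ((j + 2 : ℝ) / 2) N
  have hrising' := mul_rising_add_one ((j : ℝ) / 2) N
  have hfac := factorial_mul_rising_succ j N
  rw [show (j : ℝ) / 2 + 1 = (j + 2) / 2 by ring] at hrising'
  rw [christoffel, show (j + 2 : ℝ) / 2 - 1 = j / 2 by ring,
    show (j + 2 : ℝ) / 2 + j / 2 = j + 1 by ring,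
    eq_div_of_mul_eq (by positivity) ((mul_comm _ _).trans hrising),
    eq_div_of_mul_eq (by positivity) ((mul_comm _ _).trans hrising'),
    eq_div_of_mul_eq (by positivity) ((mul_comm _ _).trans hfac)]
  field_simp
  ring

lemma christoffel_half_half_le {j N m : ℕ} (hj : 0 < j) (hN : 0 < N) (hNm : N ≤ m + 1) :
    christoffel ((j + 2 : ℝ) / 2) ((j + 2 : ℝ) / 2) m ≤
      ((m + 1 : ℝ) / N) ^ (j + 2) * christoffel ((j + 2 : ℝ) / 2) ((j + 2 : ℝ) / 2 - 1) N := by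
  have hj' : (0 : ℝ) < j := Nat.cast_pos.2 hj
  have hN' : (0 : ℝ) < N := Nat.cast_pos.2 hN
  have hNm' : (N : ℝ) ≤ m + 1 := by exact_mod_cast hNm
  have hlin : 2 * (m : ℝ) + (j + 1) + 1 ≤ (m + 1) / N * (2 * N + j) := by
    have h1 : 1 ≤ (m + 1 : ℝ) / N := (one_le_div hN').2 hNm'
    have h2 : (m + 1 : ℝ) / N * N = m + 1 := div_mul_cancel₀ _ hN'.ne'
    linarith [mul_le_mul_of_nonneg_right h1 hj'.le]
  have hquot : (N : ℝ) / (j + 1) ≤ (2 * N + j + 2) / j := by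
    rw [div_le_div_iff₀ (by positivity) hj']
    nlinarith
  have hrising : rising (m + 1) (j + 1) ≤
      ((m + 1 : ℝ) / N) ^ (j + 1) * (N * rising (N + 1) j) := by
    rw [mul_rising_add_one, ← rising_succ]
    exact rising_le_div_pow_mul hN' hNm' _
  have := rising_pos (show (0 : ℝ) < N + 1 by positivity) j
  rw [christoffel_half_half_sub_one hj, show (j + 2 : ℝ) = (j + 1 : ℕ) + 1 by push_cast; ring,
    christoffel_half_half, Nat.factorial_succ]
  push_cast
  calc rising (m + 1) (j + 1) / ((j + 1) * j.factorial) * ((2 * m + (j + 1) + 1) / (j + 1 + 1))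
      ≤ ((m + 1 : ℝ) / N) ^ (j + 1) * (N * rising (N + 1) j) / ((j + 1) * j.factorial) *
          ((m + 1) / N * (2 * N + j) / (j + 1 + 1)) := by gcongr
    _ = ((m + 1 : ℝ) / N) ^ (j + 2) * (rising (N + 1) j / j.factorial *
          (N / (j + 1) * (2 * N + j) / (j + 1 + 1))) := by
        rw [pow_succ _ (j + 1)]
        field_simp
    _ ≤ ((m + 1 : ℝ) / N) ^ (j + 2) * (rising (N + 1) j / j.factorial *
          ((2 * N + j + 2) / j * (2 * N + j) / (j + 1 + 1))) := by gcongr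
    _ = _ := by field_simp

lemma christoffel_le_exp_two_mul {d n : ℕ} (hd : 3 ≤ d) (hn : 0 < n) :
    christoffel (d / 2) (d / 2) ((d + 2) * n - 1) ≤
      exp 2 * christoffel (d / 2) (d / 2 - 1) (d * n) := by
  obtain ⟨j, rfl⟩ : ∃ j, d = j + 2 := ⟨d - 2, by omega⟩
  have hj : (0 : ℝ) < j := Nat.cast_pos.2 (by omega)
  have : (0 : ℝ) < n := Nat.cast_pos.2 hn
  obtain ⟨m, hm⟩ : ∃ m, (j + 2 + 2) * n = m + 1 := Nat.exists_eq_succ_of_ne_zero (by positivity)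
  have hratio : (m + 1 : ℝ) / ((j + 2) * n : ℕ) = 2 / (j + 2) + 1 := by
    rw [show (m + 1 : ℝ) = (j + 2 + 2) * n by exact_mod_cast hm.symm]
    push_cast
    field_simp
    ring
  have hpow : (2 / (j + 2) + 1 : ℝ) ^ (j + 2) ≤ exp 2 := by
    calc (2 / (j + 2) + 1 : ℝ) ^ (j + 2) ≤ exp (2 / (j + 2)) ^ (j + 2) := by
          gcongr
          exact Real.add_one_le_exp _
      _ = exp 2 := by
          rw [← Real.exp_nat_mul]
          push_cast
          field_simp
  have hle : (j + 2) * n ≤ m + 1 := hm ▸ Nat.mul_le_mul_right n (by omega)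
  have := christoffel_pos (show (0 : ℝ) < (j + 2) / 2 by positivity)
    (show (0 : ℝ) < (j + 2) / 2 - 1 by linarith) ((j + 2) * n)
  rw [hm, Nat.add_sub_cancel, Nat.cast_add, Nat.cast_two]
  refine (christoffel_half_half_le (by omega) (by positivity) hle).trans ?_
  rw [hratio]
  gcongr

lemma integral_betaMeasure_add_one_right_le {a b : ℝ} (ha : 0 < a) (hb : 0 < b) {g : ℝ → ℝ}
    (hg : Continuous g) (hg0 : ∀ u, 0 ≤ g u) :
    ∫ u, g u ∂betaMeasure a (b + 1) ≤ (a + b) / b * ∫ u, g u ∂betaMeasure a b := by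
  have hβ : beta a (b + 1) / beta a b = b / (a + b) := by
    have := Real.Gamma_pos_of_pos ha
    have := Real.Gamma_pos_of_pos hb
    have := Real.Gamma_pos_of_pos (add_pos ha hb)
    rw [beta, beta, ← add_assoc, Real.Gamma_add_one hb.ne', Real.Gamma_add_one (by positivity)]
    field_simp
  have hshift := integral_betaMeasure_add ha hb (s := 0) (t := 1) (by simpa) (by positivity) g
  simp only [add_zero, Real.rpow_zero, one_mul, Real.rpow_one, hβ] at hshift
  have hint {f : ℝ → ℝ} (hf : Continuous f) : Integrable f (betaMeasure a b) :=
    integrable_betaMeasure ha hb hf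
  calc ∫ u, g u ∂betaMeasure a (b + 1)
      = (a + b) / b * ∫ u, (1 - u) * g u ∂betaMeasure a b := by
        rw [hshift]
        field_simp
    _ ≤ (a + b) / b * ∫ u, g u ∂betaMeasure a b := by
        gcongr ?_ * ?_
        refine integral_mono_ae (hint (by fun_prop)) (hint hg) ?_
        filter_upwards [ae_mem_Ioo_betaMeasure a b] with u hu
        exact mul_le_of_le_one_left (hg0 u) (by linarith [hu.1])

lemma integral_jacobiPoly_half_sq_le {d : ℕ} (hd : 3 ≤ d) {r : ℝ} (hr : 0 ≤ r) (N : ℕ) :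
    ∫ u, (jacobiPoly (d / 2 + r + 1) (d / 2 - 1) N).eval u ^ 2 ∂betaMeasure (d / 2) (d / 2) ≤
      36 * 4 ^ (⌊r⌋₊ + 1) / christoffel (d / 2) (d / 2 - 1) N := by
  have hd' : (3 : ℝ) ≤ d := by exact_mod_cast hd
  have ha : (0 : ℝ) < d / 2 := by linarith
  have hb : (0 : ℝ) < d / 2 - 1 := by linarith
  have hfloor := Nat.floor_le hr
  have hfloor' := (Nat.lt_floor_add_one r).le
  have hinterp := integral_jacobiPoly_add_sq_le ha hb (sub_nonneg.2 hfloor)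
    (sub_le_iff_le_add'.2 hfloor') (by linarith) ⌊r⌋₊ N
  have hright := integral_betaMeasure_add_one_right_le ha hb
    (g := fun u => (jacobiPoly (d / 2 + r + 1) (d / 2 - 1) N).eval u ^ 2) (by fun_prop)
    fun u => sq_nonneg _
  rw [add_assoc (d / 2 : ℝ), sub_add_cancel] at hinterp
  rw [sub_add_cancel] at hright
  have hfour : ((d : ℝ) / 2 + (d / 2 - 1)) / (d / 2 - 1) ≤ 4 := by
    rw [div_le_iff₀ hb]
    linarith
  have := christoffel_pos ha hb N
  calc _ ≤ _ := hright
    _ ≤ 4 * (9 * 4 ^ (⌊r⌋₊ + 1) / christoffel (d / 2) (d / 2 - 1) N) := by gcongr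
    _ = _ := by ring

/-- A bound for the operator norms of `σ_{d;n,r}` and `σ̃_{d;n,r}` relative to the
Marcinkiewicz–Zygmund constant of the measure. -/
def kernelBound (r : ℝ) : ℝ := 6 * 2 ^ (⌊r⌋₊ + 1) * exp 1

lemma kernelBound_pos (r : ℝ) : 0 < kernelBound r := by
  unfold kernelBound
  positivity

lemma christoffel_mul_integral_sq_le {d n : ℕ} (hd : 3 ≤ d) (hn : 0 < n) {r : ℝ} (hr : 0 ≤ r) :
    christoffel (d / 2) (d / 2) ((d + 2) * n - 1) *
        ∫ u, (jacobiPoly (d / 2 + r + 1) (d / 2 - 1) (d * n)).eval u ^ 2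
          ∂betaMeasure (d / 2) (d / 2) ≤
      kernelBound r ^ 2 := by
  have hd' : (3 : ℝ) ≤ d := by exact_mod_cast hd
  have hT := christoffel_pos (show (0 : ℝ) < d / 2 by linarith)
    (show (0 : ℝ) < d / 2 - 1 by linarith) (d * n)
  calc _ ≤ exp 2 * christoffel (d / 2) (d / 2 - 1) (d * n) *
        (36 * 4 ^ (⌊r⌋₊ + 1) / christoffel (d / 2) (d / 2 - 1) (d * n)) :=
        mul_le_mul (christoffel_le_exp_two_mul hd hn) (integral_jacobiPoly_half_sq_le hd hr _)
          (integral_nonneg fun u => sq_nonneg _) (by positivity)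
    _ = 36 * 4 ^ (⌊r⌋₊ + 1) * exp 2 := by
        generalize christoffel _ _ _ = T at hT
        field_simp
    _ = kernelBound r ^ 2 := by
        rw [kernelBound, mul_pow, mul_pow, ← pow_mul, mul_comm _ 2, pow_mul, ← Real.exp_nat_mul]
        norm_num

/-! ### Integration over the sphere -/

section Polar

variable {E : Type*} [NormedAddCommGroup E] [NormedSpace ℝ E] [FiniteDimensional ℝ E]
  [MeasurableSpace E] [BorelSpace E]

lemma integral_volumeIoiPow (n : ℕ) (G : ℝ → ℝ) :
    ∫ r : Ioi (0 : ℝ), G r ∂Measure.volumeIoiPow n = ∫ r in Ioi (0 : ℝ), r ^ n * G r := by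
  simp only [Measure.volumeIoiPow, ENNReal.ofReal]
  rw [integral_withDensity_eq_integral_smul (by fun_prop),
    integral_subtype_comap measurableSet_Ioi fun r => Real.toNNReal (r ^ n) • G r]
  refine setIntegral_congr_fun measurableSet_Ioi fun r hr => ?_
  rw [NNReal.smul_def, Real.coe_toNNReal _ (pow_nonneg (le_of_lt hr) _), smul_eq_mul]

lemma integral_eq_integral_toSphere_mul (μ : Measure E) [μ.IsAddHaarMeasure] [Nontrivial E]
    {H : E → ℝ} {g : Metric.sphere (0 : E) 1 → ℝ} {G : ℝ → ℝ}
    (hH : ∀ (y : Metric.sphere (0 : E) 1) (r : ℝ), 0 < r → H (r • (y : E)) = g y * G r) :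
    ∫ v, H v ∂μ = (∫ y, g y ∂μ.toSphere) *
      ∫ r in Ioi (0 : ℝ), r ^ (Module.finrank ℝ E - 1) * G r := by
  calc ∫ v, H v ∂μ = ∫ v : ({0}ᶜ : Set E), H v ∂(μ.comap (↑)) := by
        rw [integral_subtype_comap (measurableSet_singleton _).compl H, restrict_compl_singleton]
    _ = ∫ z, g z.1 * G z.2 ∂μ.toSphere.prod (.volumeIoiPow (Module.finrank ℝ E - 1)) := by
        rw [← μ.measurePreserving_homeomorphUnitSphereProd.integral_comp
          (Homeomorph.measurableEmbedding _)]
        congr with v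
        have hv : (0 : ℝ) < ‖v.1‖ := norm_pos_iff.2 v.2
        rw [homeomorphUnitSphereProd_apply_snd_coe, ← hH _ _ hv,
          homeomorphUnitSphereProd_apply_fst_coe, smul_inv_smul₀ hv.ne']
    _ = _ := by
        rw [← integral_volumeIoiPow]
        exact integral_prod_mul g fun r : Ioi (0 : ℝ) => G r

end Polar

lemma integral_Ioi_pow_mul_exp_neg_sq (m : ℕ) :
    ∫ r in Ioi (0 : ℝ), r ^ m * exp (-r ^ 2) = Gamma ((m + 1) / 2) / 2 := by
  have h := integral_rpow_mul_exp_neg_rpow (p := 2) (q := m) two_pos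
    (neg_one_lt_zero.trans_le m.cast_nonneg)
  simp only [Real.rpow_natCast, Real.rpow_two] at h
  rw [h]
  ring

lemma integral_eq_integral_sphere_mul {d m : ℕ} {H : EuclideanSpace ℝ (Fin (d + 1)) → ℝ}
    {g : Sph d → ℝ}
    (hH : ∀ (y : Sph d) (r : ℝ), 0 < r → H (r • y.1) = g y * (r ^ m * exp (-r ^ 2))) :
    ∫ v, H v = (∫ y, g y ∂(volume : Measure (EuclideanSpace ℝ (Fin (d + 1)))).toSphere) *
      (Gamma ((d + 1 + m) / 2) / 2) := by
  rw [integral_eq_integral_toSphere_mul volume hH, finrank_euclideanSpace_fin,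
    Nat.add_sub_cancel]
  simp only [← mul_assoc, ← pow_add, integral_Ioi_pow_mul_exp_neg_sq]
  push_cast
  ring_nf

lemma integral_sphMeasure {d : ℕ} (g : Sph d → ℝ) :
    ∫ y, g y ∂sphMeasure d =
      (∫ y, g y ∂(volume : Measure (EuclideanSpace ℝ (Fin (d + 1)))).toSphere) /
        (volume : Measure (EuclideanSpace ℝ (Fin (d + 1)))).toSphere.real univ := by
  rw [sphMeasure, integral_smul_measure, smul_eq_mul, ENNReal.toReal_inv, inv_mul_eq_div,
    measureReal_def]

instance isProbabilityMeasure_sphMeasure (d : ℕ) : IsProbabilityMeasure (sphMeasure d) :=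
  ⟨ENNReal.inv_mul_cancel (Measure.measure_univ_ne_zero.2 (Measure.toSphere_ne_zero _))
    (measure_ne_top _ _)⟩

lemma integral_sphMeasure_comp_linearIsometryEquiv {d : ℕ}
    (g : EuclideanSpace ℝ (Fin (d + 1)) → ℝ)
    (L : EuclideanSpace ℝ (Fin (d + 1)) ≃ₗᵢ[ℝ] EuclideanSpace ℝ (Fin (d + 1))) :
    ∫ y : Sph d, g (L y) ∂sphMeasure d = ∫ y : Sph d, g y ∂sphMeasure d := by
  set H : EuclideanSpace ℝ (Fin (d + 1)) → ℝ := fun v => g (‖v‖⁻¹ • v) * exp (-‖v‖ ^ 2) with hH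
  have hpolar {v : EuclideanSpace ℝ (Fin (d + 1))} (hv : ‖v‖ = 1) (r : ℝ) (hr : 0 < r) :
      H (r • v) = g v * (r ^ 0 * exp (-r ^ 2)) := by
    simp only [hH, norm_smul, hv, Real.norm_of_nonneg hr.le, mul_one, inv_smul_smul₀ hr.ne',
      pow_zero, one_mul]
  have hvol : ∫ v, H (L v) = ∫ v, H v :=
    L.measurePreserving.integral_comp L.toHomeomorph.measurableEmbedding H
  rw [integral_eq_integral_sphere_mul fun y r hr => hpolar (norm_eq_of_mem_sphere y) r hr,
    integral_eq_integral_sphere_mul (g := fun y => g (L y)) (m := 0) fun y r hr => by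
      rw [map_smul, hpolar (by rw [L.norm_map, norm_eq_of_mem_sphere]) r hr]] at hvol
  have : 0 < Gamma (((d : ℝ) + 1 + (0 : ℕ)) / 2) := Gamma_pos_of_pos (by positivity)
  rw [integral_sphMeasure, integral_sphMeasure, mul_right_cancel₀ (by positivity) hvol]

/-- The moments of the Gaussian density `e^{-t²}/√π`. -/
def gaussMoment (k : ℕ) : ℝ := (∫ t : ℝ, t ^ k * exp (-t ^ 2)) / √π

lemma gaussMoment_of_odd {k : ℕ} (hk : Odd k) : gaussMoment k = 0 := by
  have hneg := integral_neg_eq_self (fun t : ℝ => t ^ k * exp (-t ^ 2)) volume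
  simp only [hk.neg_pow, even_two.neg_pow, neg_mul, integral_neg] at hneg
  rw [gaussMoment, self_eq_neg.1 hneg.symm, zero_div]

lemma gaussMoment_two_mul (i : ℕ) : gaussMoment (2 * i) = Gamma (i + 1 / 2) / √π := by
  have habs := integral_comp_abs (f := fun t : ℝ => t ^ (2 * i) * exp (-t ^ 2))
  simp only [(even_two_mul i).pow_abs, sq_abs, integral_Ioi_pow_mul_exp_neg_sq] at habs
  rw [gaussMoment, habs, mul_div_cancel₀ _ two_ne_zero]
  push_cast
  ring_nf

lemma gaussMoment_zero : gaussMoment 0 = 1 := by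
  have h := gaussMoment_two_mul 0
  rwa [mul_zero, Nat.cast_zero, zero_add, Real.Gamma_one_half_eq, div_self (by positivity)] at h

lemma integral_toSphere_prod_pow {d : ℕ} (k : Fin (d + 1) → ℕ) :
    (∫ y : Sph d, ∏ i, y.1 i ^ k i
        ∂(volume : Measure (EuclideanSpace ℝ (Fin (d + 1)))).toSphere) *
      (Gamma ((d + 1 + (∑ i, k i : ℕ)) / 2) / 2) = √π ^ (d + 1) * ∏ i, gaussMoment (k i) := by
  have hfubini : ∫ v : EuclideanSpace ℝ (Fin (d + 1)), ∏ i, (v i ^ k i * exp (-v i ^ 2)) =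
      ∏ i, ∫ t : ℝ, t ^ k i * exp (-t ^ 2) := by
    rw [← (PiLp.volume_preserving_toLp (Fin (d + 1))).integral_comp
      (MeasurableEquiv.toLp 2 (Fin (d + 1) → ℝ)).measurableEmbedding]
    exact integral_fintype_prod_volume_eq_prod fun i (t : ℝ) => t ^ k i * exp (-t ^ 2)
  rw [← integral_eq_integral_sphere_mul (H := fun v => ∏ i, (v i ^ k i * exp (-v i ^ 2))), hfubini]
  · have : √π ≠ 0 := by positivity
    simp only [gaussMoment, Finset.prod_div_distrib, Finset.prod_const, Finset.card_univ,
      Fintype.card_fin]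
    field_simp
  · intro y r _
    have hsq : ∑ i, y.1 i ^ 2 = 1 := by
      rw [← EuclideanSpace.real_norm_sq_eq, norm_eq_of_mem_sphere, one_pow]
    simp only [PiLp.smul_apply, smul_eq_mul, mul_pow, Finset.prod_mul_distrib, ← Real.exp_sum,
      Finset.prod_pow_eq_pow_sum, Finset.sum_neg_distrib, ← Finset.mul_sum, hsq, mul_one]
    ring

lemma integral_sphMeasure_prod_pow {d : ℕ} (k : Fin (d + 1) → ℕ) :
    ∫ y : Sph d, ∏ i, y.1 i ^ k i ∂sphMeasure d =
      Gamma ((d + 1) / 2) / Gamma ((d + 1 + (∑ i, k i : ℕ)) / 2) * ∏ i, gaussMoment (k i) := by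
  have htotal := integral_toSphere_prod_pow (d := d) 0
  have hk := integral_toSphere_prod_pow k
  simp only [Pi.zero_apply, pow_zero, Finset.prod_const_one, integral_const, smul_eq_mul, mul_one,
    Finset.sum_const_zero, Nat.cast_zero, add_zero, gaussMoment_zero] at htotal
  have : 0 < Gamma (((d : ℝ) + 1) / 2) := Gamma_pos_of_pos (by positivity)
  have : 0 < Gamma (((d : ℝ) + 1 + (∑ i, k i : ℕ)) / 2) := Gamma_pos_of_pos (by positivity)
  have hne : (volume : Measure (EuclideanSpace ℝ (Fin (d + 1)))).toSphere.real univ ≠ 0 :=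
    left_ne_zero_of_mul (htotal.trans_ne (by positivity))
  rw [integral_sphMeasure]
  field_simp
  linear_combination 2 * hk - 2 * (∏ i, gaussMoment (k i)) * htotal

/-! ### Zonal integrals -/

lemma beta_add_one_add_one_div {a : ℝ} (ha : 0 < a) :
    beta (a + 1) (a + 1) / beta a a = a / (4 * (a + 1 / 2)) := by
  have := Gamma_pos_of_pos ha
  have := Gamma_pos_of_pos (show 0 < a + a by positivity)
  rw [beta, beta, show a + 1 + (a + 1) = a + a + 1 + 1 by ring, Real.Gamma_add_one ha.ne',
    Real.Gamma_add_one (by positivity), Real.Gamma_add_one (by positivity)]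
  field_simp
  ring

lemma integral_pow_mul_one_sub_pow_mul_betaMeasure {a : ℝ} (ha : 0 < a) (s : ℕ) (f : ℝ → ℝ) :
    ∫ u, u ^ s * (1 - u) ^ s * f u ∂betaMeasure a a =
      beta (a + s) (a + s) / beta a a * ∫ u, f u ∂betaMeasure (a + s) (a + s) := by
  simpa only [Real.rpow_natCast] using
    integral_betaMeasure_add ha ha (s := s) (t := s) (by positivity) (by positivity) f

lemma integral_betaMeasure_one_sub {a : ℝ} (ha : 0 < a) (f : ℝ → ℝ) :
    ∫ u, f (1 - u) ∂betaMeasure a a = ∫ u, f u ∂betaMeasure a a := by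
  rw [integral_betaMeasure ha ha, integral_betaMeasure ha ha, ← integral_Ioc_eq_integral_Ioo,
    ← integral_Ioc_eq_integral_Ioo, ← intervalIntegral.integral_of_le zero_le_one,
    ← intervalIntegral.integral_of_le zero_le_one]
  have hreflect := intervalIntegral.integral_comp_sub_left (a := 0) (b := 1)
    (fun u : ℝ => u ^ (a - 1) * (1 - u) ^ (a - 1) * f u) 1
  rw [sub_zero, sub_self] at hreflect
  rw [← hreflect]
  simp only [sub_sub_cancel, mul_comm ((1 - (_ : ℝ)) ^ (a - 1))]

lemma integral_one_sub_two_mul_pow_betaMeasure {a : ℝ} (ha : 0 < a) (j : ℕ) :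
    ∫ u, (1 - 2 * u) ^ j ∂betaMeasure a a =
      gaussMoment j * Gamma (a + 1 / 2) / Gamma (a + 1 / 2 + j / 2) := by
  rcases j.even_or_odd' with ⟨i, rfl | rfl⟩
  · rw [gaussMoment_two_mul, Nat.cast_mul, Nat.cast_two, mul_div_cancel_left₀ _ two_ne_zero]
    induction i generalizing a with
    | zero =>
      have := isProbabilityMeasureBeta ha ha
      have := Gamma_pos_of_pos (show 0 < a + 1 / 2 by positivity)
      simp only [mul_zero, pow_zero, integral_const, probReal_univ, smul_eq_mul, mul_one,
        Nat.cast_zero, zero_add, add_zero, Real.Gamma_one_half_eq]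
      field_simp
    | succ i ih =>
      have hint {f : ℝ → ℝ} (hf : Continuous f) : Integrable f (betaMeasure a a) :=
        integrable_betaMeasure ha ha hf
      have hshift := integral_pow_mul_one_sub_pow_mul_betaMeasure ha 1 fun u =>
        (1 - 2 * u) ^ (2 * i)
      rw [Nat.cast_one, ih (by positivity), beta_add_one_add_one_div ha] at hshift
      have := Gamma_pos_of_pos (show 0 < a + 1 / 2 by positivity)
      have := Gamma_pos_of_pos (show 0 < a + 1 / 2 + i by positivity)
      calc ∫ u, (1 - 2 * u) ^ (2 * (i + 1)) ∂betaMeasure a a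
          = ∫ u, ((1 - 2 * u) ^ (2 * i) - 4 * (u ^ 1 * (1 - u) ^ 1 * (1 - 2 * u) ^ (2 * i)))
              ∂betaMeasure a a := by
            congr with u
            ring
        _ = _ := by
            rw [integral_sub (hint (by fun_prop)) (hint (by fun_prop)), integral_const_mul, hshift,
              ih ha, show a + 1 + 1 / 2 = a + 1 / 2 + 1 by ring,
              show a + 1 / 2 + 1 + i = a + 1 / 2 + i + 1 by ring, Nat.cast_succ,
              ← add_assoc (a + 1 / 2), add_right_comm (i : ℝ) 1,
              Real.Gamma_add_one (by positivity), Real.Gamma_add_one (by positivity),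
              Real.Gamma_add_one (by positivity)]
            field_simp
            ring
  · have hodd : Odd (2 * i + 1) := odd_two_mul_add_one i
    have hneg := integral_betaMeasure_one_sub ha fun u => (1 - 2 * u) ^ (2 * i + 1)
    simp only [show ∀ u : ℝ, 1 - 2 * (1 - u) = -(1 - 2 * u) by intro u; ring, hodd.neg_pow,
      integral_neg] at hneg
    rw [gaussMoment_of_odd hodd, zero_mul, zero_div, self_eq_neg.1 hneg.symm]

/-- The ratio between a monomial in the coordinates orthogonal to the pole and the power of
`u (1 - u)` to which averaging over the stabilizer of the pole reduces it, where
`u = (1 - y 0) / 2`. -/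
def zonalCoeff {d : ℕ} (k : Fin d → ℕ) : ℝ :=
  (∏ i, gaussMoment (k i)) *
    (Gamma (d / 2 + 1 / 2) / Gamma (d / 2 + ((∑ i, k i) / 2 : ℕ) + 1 / 2)) *
    (beta (d / 2) (d / 2) /
      beta (d / 2 + ((∑ i, k i) / 2 : ℕ)) (d / 2 + ((∑ i, k i) / 2 : ℕ)))

lemma zonalCoeff_zero {d : ℕ} (hd : 1 ≤ d) : zonalCoeff (0 : Fin d → ℕ) = 1 := by
  have hd' : (0 : ℝ) < d / 2 := by positivity
  have := beta_pos hd' hd'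
  have := Gamma_pos_of_pos (show (0 : ℝ) < d / 2 + 1 / 2 by positivity)
  simp only [zonalCoeff, Pi.zero_apply, gaussMoment_zero, Finset.prod_const_one,
    Finset.sum_const_zero, Nat.zero_div, Nat.cast_zero, add_zero, one_mul]
  field_simp

lemma zonalCoeff_of_odd {d : ℕ} {k : Fin d → ℕ} {i : Fin d} (hi : Odd (k i)) :
    zonalCoeff k = 0 := by
  rw [zonalCoeff, Finset.prod_eq_zero (Finset.mem_univ i) (gaussMoment_of_odd hi), zero_mul,
    zero_mul]

lemma zonalCoeff_mul_zero_pow {d : ℕ} (hd : 1 ≤ d) (k : Fin d → ℕ) :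
    zonalCoeff k * 0 ^ ((∑ i, k i) / 2) = ∏ i, 0 ^ k i := by
  by_cases hk : k = 0
  · simp [hk, zonalCoeff_zero hd]
  obtain ⟨i, hi⟩ := Function.ne_iff.1 hk
  rw [Finset.prod_eq_zero (Finset.mem_univ i) (zero_pow hi)]
  rcases (k i).even_or_odd with heven | hodd
  · have := Finset.single_le_sum (fun j _ => (k j).zero_le) (Finset.mem_univ i)
    have := heven.two_dvd
    rw [zero_pow (by simp only [Pi.zero_apply] at hi; omega), mul_zero]
  · rw [zonalCoeff_of_odd hodd, zero_mul]

lemma integral_sphMeasure_pow_mul_prod_succ {d : ℕ} (hd : 1 ≤ d) (j : ℕ) (k : Fin d → ℕ) :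
    ∫ y : Sph d, y.1 0 ^ j * ∏ i : Fin d, y.1 i.succ ^ k i ∂sphMeasure d =
      zonalCoeff k * ∫ u, (1 - 2 * u) ^ j * (u * (1 - u)) ^ ((∑ i, k i) / 2)
        ∂betaMeasure (d / 2) (d / 2) := by
  have hsphere := integral_sphMeasure_prod_pow (Fin.cons j k)
  simp only [Fin.prod_univ_succ, Fin.sum_univ_succ, Fin.cons_zero, Fin.cons_succ] at hsphere
  rw [hsphere]
  by_cases hodd : ∃ i, Odd (k i)
  · obtain ⟨i, hi⟩ := hodd
    rw [zonalCoeff_of_odd hi, zero_mul,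
      Finset.prod_eq_zero (Finset.mem_univ i) (gaussMoment_of_odd hi), mul_zero, mul_zero]
  obtain ⟨s, hs⟩ : ∃ s, ∑ i, k i = 2 * s := by
    refine (Finset.even_sum _ fun i _ => ?_).two_dvd
    exact Nat.not_odd_iff_even.1 fun h => hodd ⟨i, h⟩
  have ha : (0 : ℝ) < d / 2 := by positivity
  have has : (0 : ℝ) < d / 2 + s := by positivity
  have hbeta := integral_pow_mul_one_sub_pow_mul_betaMeasure ha s fun u => (1 - 2 * u) ^ j
  rw [integral_one_sub_two_mul_pow_betaMeasure has] at hbeta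
  simp only [mul_comm ((1 - 2 * (_ : ℝ)) ^ j), mul_pow, zonalCoeff, hs,
    Nat.mul_div_cancel_left s two_pos, hbeta]
  rw [show ((d : ℝ) + 1 + (j + 2 * s : ℕ)) / 2 = d / 2 + s + 1 / 2 + j / 2 by push_cast; ring,
    add_div]
  have := beta_pos ha ha
  have hB := beta_pos has has
  have := Gamma_pos_of_pos (show (0 : ℝ) < d / 2 + s + 1 / 2 by positivity)
  generalize beta (d / 2 + s : ℝ) _ = B at hB
  field_simp

lemma exists_zonal_monomial {d : ℕ} (hd : 1 ≤ d) (k : Fin (d + 1) → ℕ) :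
    ∃ h : Polynomial ℝ, h.natDegree ≤ ∑ i, k i ∧
      h.eval 0 = ∏ i, (EuclideanSpace.single (0 : Fin (d + 1)) (1 : ℝ)) i ^ k i ∧
      ∀ j : ℕ, ∫ y : Sph d, y.1 0 ^ j * ∏ i, y.1 i ^ k i ∂sphMeasure d =
        ∫ u, (1 - 2 * u) ^ j * h.eval u ∂betaMeasure (d / 2) (d / 2) := by
  refine ⟨.C (zonalCoeff fun i => k i.succ) * ((1 - .C 2 * .X) ^ k 0 *
    (.X * (1 - .X)) ^ ((∑ i : Fin d, k i.succ) / 2)), ?_, ?_, fun j => ?_⟩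
  · have hlin : (1 - .C 2 * .X : Polynomial ℝ).natDegree ≤ 1 := by compute_degree
    have hquad : (.X * (1 - .X) : Polynomial ℝ).natDegree ≤ 2 := by compute_degree
    have hpow := Polynomial.natDegree_mul_le_of_le (Polynomial.natDegree_pow_le_of_le (k 0) hlin)
      (Polynomial.natDegree_pow_le_of_le ((∑ i : Fin d, k i.succ) / 2) hquad)
    refine (Polynomial.natDegree_C_mul_le _ _).trans (hpow.trans ?_)
    rw [Fin.sum_univ_succ]
    omega
  · simp [Fin.prod_univ_succ, zonalCoeff_mul_zero_pow hd]
  · simp only [Fin.prod_univ_succ, ← mul_assoc, ← pow_add]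
    rw [integral_sphMeasure_pow_mul_prod_succ hd, ← integral_const_mul]
    congr with u
    simp only [Polynomial.eval_mul, Polynomial.eval_C, Polynomial.eval_pow, Polynomial.eval_sub,
      Polynomial.eval_one, Polynomial.eval_X]
    ring

lemma integrable_of_continuous {X : Type*} [TopologicalSpace X] [CompactSpace X]
    [MeasurableSpace X] [OpensMeasurableSpace X] (μ : Measure X) [IsFiniteMeasure μ] {f : X → ℝ}
    (hf : Continuous f) : Integrable f μ :=
  hf.integrable_of_hasCompactSupport (.of_compactSpace f)

lemma exists_zonal_monomial_eval {d : ℕ} (hd : 1 ≤ d) (k : Fin (d + 1) → ℕ) :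
    ∃ h : Polynomial ℝ, h.natDegree ≤ ∑ i, k i ∧
      h.eval 0 = ∏ i, (EuclideanSpace.single (0 : Fin (d + 1)) (1 : ℝ)) i ^ k i ∧
      ∀ F : Polynomial ℝ,
        ∫ y : Sph d, F.eval ((1 - y.1 0) / 2) * ∏ i, y.1 i ^ k i ∂sphMeasure d =
          ∫ u, F.eval u * h.eval u ∂betaMeasure (d / 2) (d / 2) := by
  obtain ⟨h, hdeg, hzero, hmoment⟩ := exists_zonal_monomial hd k
  refine ⟨h, hdeg, hzero, fun F => ?_⟩
  have ha : (0 : ℝ) < d / 2 := by positivity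
  have haffine (G : Polynomial ℝ) : ∫ y : Sph d, G.eval (y.1 0) * ∏ i, y.1 i ^ k i ∂sphMeasure d =
      ∫ u, G.eval (1 - 2 * u) * h.eval u ∂betaMeasure (d / 2) (d / 2) := by
    induction G using Polynomial.induction_on' with
    | add G₁ G₂ h₁ h₂ =>
      simp only [Polynomial.eval_add, add_mul]
      rw [integral_add (integrable_of_continuous _ (by fun_prop))
          (integrable_of_continuous _ (by fun_prop)), h₁, h₂,
        ← integral_add (integrable_betaMeasure ha ha (by fun_prop))
          (integrable_betaMeasure ha ha (by fun_prop))]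
    | monomial j c =>
      simp only [Polynomial.eval_monomial, mul_assoc, integral_const_mul, hmoment]
  have hcomp := haffine (F.comp (.C (1 / 2) * (1 - .X)))
  simp only [Polynomial.eval_comp, Polynomial.eval_mul, Polynomial.eval_C, Polynomial.eval_sub,
    Polynomial.eval_one, Polynomial.eval_X, one_div_mul_eq_div, sub_sub_cancel,
    mul_div_cancel_left₀ _ (two_ne_zero (α := ℝ))] at hcomp
  exact hcomp

lemma exists_zonal_pole {d : ℕ} (hd : 1 ≤ d) (p : MvPolynomial (Fin (d + 1)) ℝ) :
    ∃ h : Polynomial ℝ, h.natDegree ≤ p.totalDegree ∧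
      h.eval 0 = p.eval (EuclideanSpace.single (0 : Fin (d + 1)) (1 : ℝ)).ofLp ∧
      ∀ F : Polynomial ℝ,
        ∫ y : Sph d, F.eval ((1 - y.1 0) / 2) * p.eval y.1.ofLp ∂sphMeasure d =
          ∫ u, F.eval u * h.eval u ∂betaMeasure (d / 2) (d / 2) := by
  have ha : (0 : ℝ) < d / 2 := by positivity
  choose h hdeg hzero hint using fun k : Fin (d + 1) →₀ ℕ => exists_zonal_monomial_eval hd k
  refine ⟨∑ k ∈ p.support, .C (p.coeff k) * h k, ?_, ?_, fun F => ?_⟩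
  · refine Polynomial.natDegree_sum_le_of_forall_le _ _ fun k hk => ?_
    refine (Polynomial.natDegree_C_mul_le _ _).trans ((hdeg k).trans ?_)
    rw [← Finsupp.sum_fintype k (fun _ e => e) fun _ => rfl]
    exact MvPolynomial.le_totalDegree hk
  · simp only [Polynomial.eval_finsetSum, Polynomial.eval_mul, Polynomial.eval_C, hzero,
      MvPolynomial.eval_eq']
  · simp only [MvPolynomial.eval_eq', Polynomial.eval_finsetSum, Polynomial.eval_mul,
      Polynomial.eval_C, Finset.mul_sum, mul_left_comm _ (p.coeff _)]
    rw [integral_finsetSum _ fun k _ => integrable_of_continuous _ (by fun_prop),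
      integral_finsetSum _ fun k _ => integrable_betaMeasure ha ha (by fun_prop)]
    simp only [integral_const_mul, hint]

lemma totalDegree_bind₁_le {σ τ R : Type*} [CommSemiring R] {q : σ → MvPolynomial τ R}
    (hq : ∀ i, (q i).totalDegree ≤ 1) (p : MvPolynomial σ R) :
    (MvPolynomial.bind₁ q p).totalDegree ≤ p.totalDegree := by
  rw [MvPolynomial.bind₁, MvPolynomial.aeval_def, MvPolynomial.eval₂_eq]
  refine MvPolynomial.totalDegree_finsetSum_le fun k hk => ?_
  calc _ ≤ (MvPolynomial.C (p.coeff k) : MvPolynomial τ R).totalDegree +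
        ∑ i ∈ k.support, (q i ^ k i).totalDegree :=
        (MvPolynomial.totalDegree_mul _ _).trans
          (add_le_add_right (MvPolynomial.totalDegree_finsetProd _ _) _)
    _ ≤ ∑ i ∈ k.support, k i := by
        rw [MvPolynomial.totalDegree_C, zero_add]
        refine Finset.sum_le_sum fun i _ => (MvPolynomial.totalDegree_pow _ _).trans ?_
        exact mul_le_of_le_one_right (Nat.zero_le _) (hq i)
    _ ≤ p.totalDegree := MvPolynomial.le_totalDegree hk

lemma exists_mvPolynomial_eval_comp {n : ℕ}
    (L : EuclideanSpace ℝ (Fin n) →ₗ[ℝ] EuclideanSpace ℝ (Fin n)) (p : MvPolynomial (Fin n) ℝ) :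
    ∃ q : MvPolynomial (Fin n) ℝ, q.totalDegree ≤ p.totalDegree ∧
      ∀ v, q.eval v.ofLp = p.eval (L v).ofLp := by
  set b := (EuclideanSpace.basisFun (Fin n) ℝ).toBasis
  refine ⟨MvPolynomial.bind₁ (L.toMvPolynomial b b) p,
    totalDegree_bind₁_le (L.toMvPolynomial_totalDegree_le b b) p, fun v => ?_⟩
  have hL (i : Fin n) : (L.toMvPolynomial b b i).eval v.ofLp = (L v).ofLp i :=
    LinearMap.toMvPolynomial_eval_eq_apply b b L i (b.repr v)
  rw [← MvPolynomial.aeval_eq_eval, MvPolynomial.aeval_bind₁, MvPolynomial.aeval_eq_eval]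
  exact congrArg (fun w => MvPolynomial.eval w p) (funext hL)

lemma exists_zonal {d : ℕ} (hd : 1 ≤ d) (x : Sph d) (p : MvPolynomial (Fin (d + 1)) ℝ) :
    ∃ h : Polynomial ℝ, h.natDegree ≤ p.totalDegree ∧ h.eval 0 = p.eval x.1.ofLp ∧
      ∀ F : Polynomial ℝ,
        ∫ y, F.eval ((1 - ip x y) / 2) * p.eval y.1.ofLp ∂sphMeasure d =
          ∫ u, F.eval u * h.eval u ∂betaMeasure (d / 2) (d / 2) := by
  set e : EuclideanSpace ℝ (Fin (d + 1)) := EuclideanSpace.single 0 1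
  have he : ‖e‖ = ‖x.1‖ := by simp [e]
  set L := (ℝ ∙ (e - x.1))ᗮ.reflection
  have hLe : L e = x.1 := Submodule.reflection_sub he
  obtain ⟨q, hqdeg, hq⟩ := exists_mvPolynomial_eval_comp L.toLinearEquiv.toLinearMap p
  obtain ⟨h, hdeg, hzero, hint⟩ := exists_zonal_pole hd q
  refine ⟨h, hdeg.trans hqdeg, ?_, fun F => ?_⟩
  · rw [hzero, hq]
    exact congrArg (fun v => p.eval v.ofLp) hLe
  · rw [← hint]
    refine (integral_sphMeasure_comp_linearIsometryEquiv
      (fun v => F.eval ((1 - ⟪x.1, v⟫) / 2) * p.eval v.ofLp) L).symm.trans ?_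
    congr with y
    have hinner : ⟪x.1, L y.1⟫ = y.1 0 := by
      rw [← hLe, L.inner_map_map]
      simp only [e, EuclideanSpace.inner_single_left, map_one, one_mul]
    rw [hq, hinner]
    rfl

/-! ### Zonal polynomials -/

section Zonal

variable {d : ℕ}

lemma ip_eq_sum (x y : Sph d) : ip x y = ∑ i, x.1 i * y.1 i := by
  simp only [ip, PiLp.inner_apply, RCLike.inner_apply, conj_trivial, mul_comm]

lemma ip_self (x : Sph d) : ip x x = 1 := inner_self_eq_one_of_norm_eq_one (norm_eq_of_mem_sphere x)

@[fun_prop]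
lemma continuous_ip (x : Sph d) : Continuous (ip x) := by
  unfold ip
  fun_prop

lemma one_sub_ip_div_two_mem_Icc (x y : Sph d) : (1 - ip x y) / 2 ∈ Icc (0 : ℝ) 1 := by
  have hip : |ip x y| ≤ 1 := by
    simpa only [ip, norm_eq_of_mem_sphere, mul_one] using abs_real_inner_le_norm x.1 y.1
  obtain ⟨hl, hu⟩ := abs_le.1 hip
  constructor <;> linarith

lemma IsSphPoly.mono {m m' : ℝ} {g : Sph d → ℝ} (hg : IsSphPoly d m g) (h : m ≤ m') :
    IsSphPoly d m' g :=
  let ⟨p, hp, hpg⟩ := hg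
  ⟨p, hp.trans_le h, hpg⟩

lemma IsSphPoly.continuous {m : ℝ} {g : Sph d → ℝ} (hg : IsSphPoly d m g) : Continuous g := by
  obtain ⟨p, -, hpg⟩ := hg
  rw [funext hpg]
  exact p.continuous_eval.comp (by fun_prop)

lemma isSphPoly_const {m : ℝ} (hm : 0 < m) (a : ℝ) : IsSphPoly d m fun _ => a :=
  ⟨.C a, by simpa only [MvPolynomial.totalDegree_C, Nat.cast_zero], fun _ => by simp⟩

lemma totalDegree_aeval_le {σ R : Type*} [CommSemiring R] {ℓ : MvPolynomial σ R}
    (hℓ : ℓ.totalDegree ≤ 1) (F : Polynomial R) :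
    (Polynomial.aeval ℓ F).totalDegree ≤ F.natDegree := by
  rw [Polynomial.aeval_eq_sum_range]
  refine MvPolynomial.totalDegree_finsetSum_le fun k hk => ?_
  calc _ ≤ (ℓ ^ k).totalDegree := MvPolynomial.totalDegree_smul_le _ _
    _ ≤ k * ℓ.totalDegree := MvPolynomial.totalDegree_pow _ _
    _ ≤ k := mul_le_of_le_one_right k.zero_le hℓ
    _ ≤ F.natDegree := Nat.lt_succ_iff.1 (Finset.mem_range.1 hk)

lemma exists_polynomial_eval_one_sub_div_two (F : Polynomial ℝ) :
    ∃ G : Polynomial ℝ, G.natDegree ≤ F.natDegree ∧ ∀ t, G.eval t = F.eval ((1 - t) / 2) := by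
  refine ⟨F.comp (.C (1 / 2) * (1 - .X)), ?_, fun t => by simp [div_eq_inv_mul]⟩
  refine Polynomial.natDegree_comp_le.trans (mul_le_of_le_one_right (Nat.zero_le _) ?_)
  compute_degree

lemma exists_mvPolynomial_zonal (x : Sph d) (F : Polynomial ℝ) :
    ∃ q : MvPolynomial (Fin (d + 1)) ℝ, q.totalDegree ≤ F.natDegree ∧
      ∀ y : Sph d, q.eval y.1.ofLp = F.eval ((1 - ip x y) / 2) := by
  obtain ⟨G, hdeg, hG⟩ := exists_polynomial_eval_one_sub_div_two F
  set ℓ : MvPolynomial (Fin (d + 1)) ℝ := ∑ i, .C (x.1 i) * .X i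
  have hℓ : ℓ.totalDegree ≤ 1 := MvPolynomial.totalDegree_finsetSum_le fun i _ =>
    (MvPolynomial.totalDegree_mul _ _).trans (by simp)
  refine ⟨Polynomial.aeval ℓ G, (totalDegree_aeval_le hℓ G).trans hdeg, fun y => ?_⟩
  have hy : MvPolynomial.aeval y.1.ofLp ℓ = ip x y := by simp [ℓ, ip_eq_sum]
  rw [← hG, ← hy, ← MvPolynomial.aeval_eq_eval, ← Polynomial.aeval_algHom_apply,
    Polynomial.coe_aeval_eq_eval]

lemma IsSphPoly.zonal_mul {m : ℝ} {g : Sph d → ℝ} (hg : IsSphPoly d m g) (x : Sph d)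
    (F : Polynomial ℝ) :
    IsSphPoly d (F.natDegree + m) fun y => F.eval ((1 - ip x y) / 2) * g y := by
  obtain ⟨p, hp, hpg⟩ := hg
  obtain ⟨q, hq, hqF⟩ := exists_mvPolynomial_zonal x F
  refine ⟨q * p, ?_, fun y => ?_⟩
  · calc ((q * p).totalDegree : ℝ) ≤ q.totalDegree + p.totalDegree := by
          exact_mod_cast MvPolynomial.totalDegree_mul q p
      _ < F.natDegree + m := add_lt_add_of_le_of_lt (by exact_mod_cast hq) hp
  · rw [map_mul, ← hpg]
    exact congrArg (· * g y) (hqF y).symm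

lemma isSphPoly_zonal (x : Sph d) {F : Polynomial ℝ} {m : ℝ} (hF : F.natDegree < m) :
    IsSphPoly d m fun y => F.eval ((1 - ip x y) / 2) := by
  simpa only [add_sub_cancel, mul_one] using (isSphPoly_const (sub_pos.2 hF) 1).zonal_mul x F

lemma exists_mvPolynomial_integral_pow_mul (ρ : Measure (Sph d)) [IsFiniteMeasure ρ] {f : Sph d → ℝ}
    (hf : Continuous f) (m : ℕ) :
    ∃ q : MvPolynomial (Fin (d + 1)) ℝ, q.totalDegree ≤ m ∧
      ∀ x : Sph d, ∫ y, ip x y ^ m * f y ∂ρ = q.eval x.1.ofLp := by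
  induction m generalizing f with
  | zero => exact ⟨.C (∫ y, f y ∂ρ), by simp, by simp⟩
  | succ m ih =>
    choose q hq hint using fun i : Fin (d + 1) => ih (f := fun y => y.1 i * f y) (by fun_prop)
    refine ⟨∑ i, .X i * q i, ?_, fun x => ?_⟩
    · refine MvPolynomial.totalDegree_finsetSum_le fun i _ => ?_
      refine (MvPolynomial.totalDegree_mul _ _).trans ?_
      rw [MvPolynomial.totalDegree_X, add_comm]
      exact Nat.succ_le_succ (hq i)
    · calc ∫ y, ip x y ^ (m + 1) * f y ∂ρ
          = ∫ y, ∑ i, x.1 i * (ip x y ^ m * (y.1 i * f y)) ∂ρ := by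
            congr with y
            rw [pow_succ, ip_eq_sum, Finset.mul_sum, Finset.sum_mul]
            exact Finset.sum_congr rfl fun i _ => by ring
        _ = ∑ i, x.1 i * ∫ y, ip x y ^ m * (y.1 i * f y) ∂ρ := by
            rw [integral_finsetSum _ fun i _ => integrable_of_continuous ρ (by fun_prop)]
            simp only [integral_const_mul]
        _ = _ := by simp only [hint, map_sum, map_mul, MvPolynomial.eval_X]

lemma exists_mvPolynomial_integral_zonal_mul (ρ : Measure (Sph d)) [IsFiniteMeasure ρ]
    {f : Sph d → ℝ} (hf : Continuous f) (F : Polynomial ℝ) :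
    ∃ q : MvPolynomial (Fin (d + 1)) ℝ, q.totalDegree ≤ F.natDegree ∧
      ∀ x : Sph d, ∫ y, F.eval ((1 - ip x y) / 2) * f y ∂ρ = q.eval x.1.ofLp := by
  obtain ⟨G, hdeg, hG⟩ := exists_polynomial_eval_one_sub_div_two F
  choose q hq hint using exists_mvPolynomial_integral_pow_mul ρ hf
  refine ⟨∑ k ∈ Finset.range (G.natDegree + 1), .C (G.coeff k) * q k, ?_, fun x => ?_⟩
  · refine MvPolynomial.totalDegree_finsetSum_le fun k hk => ?_
    refine (MvPolynomial.totalDegree_mul _ _).trans ?_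
    rw [MvPolynomial.totalDegree_C, zero_add]
    exact (hq k).trans ((Nat.lt_succ_iff.1 (Finset.mem_range.1 hk)).trans hdeg)
  · simp only [← hG, Polynomial.eval_eq_sum_range, Finset.sum_mul, mul_assoc]
    rw [integral_finsetSum _ fun k _ => integrable_of_continuous ρ (by fun_prop)]
    simp only [integral_const_mul, hint, map_sum, map_mul, MvPolynomial.eval_C]

lemma integral_zonal (hd : 1 ≤ d) (x : Sph d) (F : Polynomial ℝ) :
    ∫ y, F.eval ((1 - ip x y) / 2) ∂sphMeasure d = ∫ u, F.eval u ∂betaMeasure (d / 2) (d / 2) := by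
  obtain ⟨h, hdeg, hzero, hint⟩ := exists_zonal hd x 1
  have hone : h = 1 := by
    rw [MvPolynomial.totalDegree_one, Nat.le_zero] at hdeg
    rw [Polynomial.eq_C_of_natDegree_eq_zero hdeg, Polynomial.coeff_zero_eq_eval_zero, hzero,
      map_one, map_one]
  simpa only [hone, map_one, Polynomial.eval_one, mul_one] using hint F

end Zonal

/-! ### Marcinkiewicz–Zygmund measures and best approximation -/

section SignedMeasure

variable {X : Type*} [TopologicalSpace X] [CompactSpace X] [MeasurableSpace X]
  [OpensMeasurableSpace X] (ν : SignedMeasure X) {f g : X → ℝ}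

lemma abs_sInt_le (hf : Continuous f) : |sInt ν f| ≤ ∫ x, |f x| ∂ν.totalVariation := by
  rw [SignedMeasure.totalVariation, integral_add_measure (integrable_of_continuous _ hf.abs)
    (integrable_of_continuous _ hf.abs)]
  exact (abs_sub _ _).trans (add_le_add abs_integral_le_integral_abs abs_integral_le_integral_abs)

lemma sInt_sub (hf : Continuous f) (hg : Continuous g) :
    sInt ν (fun x => f x - g x) = sInt ν f - sInt ν g := by
  have hint (μ : Measure X) [IsFiniteMeasure μ] :
      ∫ x, (f x - g x) ∂μ = ∫ x, f x ∂μ - ∫ x, g x ∂μ :=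
    integral_sub (integrable_of_continuous μ hf) (integrable_of_continuous μ hg)
  rw [sInt, hint, hint, sInt, sInt, sub_sub_sub_comm]

lemma integral_abs_mul_le_sqrt_mul_sqrt (μ : Measure X) [IsFiniteMeasure μ] (hf : Continuous f)
    (hg : Continuous g) :
    ∫ x, |f x * g x| ∂μ ≤ √(∫ x, f x ^ 2 ∂μ) * √(∫ x, g x ^ 2 ∂μ) := by
  have hmem {h : X → ℝ} (hh : Continuous h) : MemLp h (ENNReal.ofReal 2) μ :=
    hh.memLp_of_hasCompactSupport (.of_compactSpace h)
  simpa only [Real.norm_eq_abs, ← abs_mul, Real.rpow_two, sq_abs, ← Real.sqrt_eq_rpow] using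
    integral_mul_norm_le_Lp_mul_Lq .two_two (hmem hf) (hmem hg)

end SignedMeasure

section MarcinkiewiczZygmund

variable {d : ℕ} {m c : ℝ} {ν : SignedMeasure (Sph d)}

lemma IsMZ.one_le (hmz : IsMZ d m ν c) (hq : IsQuadrature d m ν) (hm : 0 < m) : 1 ≤ c := by
  have hmass := abs_sInt_le ν (continuous_const (y := (1 : ℝ)))
  rw [hq _ (isSphPoly_const hm 1)] at hmass
  have hmz_one := hmz _ (isSphPoly_const (half_pos hm) 1)
  simp only [abs_one, one_pow, integral_const, probReal_univ, one_smul, mul_one] at hmass hmz_one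
  exact hmass.trans hmz_one

lemma IsMZ.integral_abs_mul_le (hmz : IsMZ d m ν c) (hc : 0 ≤ c) {f g : Sph d → ℝ}
    (hf : IsSphPoly d (m / 2) f) (hg : IsSphPoly d (m / 2) g) :
    ∫ y, |f y * g y| ∂ν.totalVariation ≤
      c * √((∫ y, f y ^ 2 ∂sphMeasure d) * ∫ y, g y ^ 2 ∂sphMeasure d) := by
  have hf2 : 0 ≤ ∫ y, f y ^ 2 ∂sphMeasure d := integral_nonneg fun y => sq_nonneg _
  calc _ ≤ √(∫ y, f y ^ 2 ∂ν.totalVariation) * √(∫ y, g y ^ 2 ∂ν.totalVariation) :=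
        integral_abs_mul_le_sqrt_mul_sqrt _ hf.continuous hg.continuous
    _ ≤ √(c * ∫ y, f y ^ 2 ∂sphMeasure d) * √(c * ∫ y, g y ^ 2 ∂sphMeasure d) := by
        gcongr
        exacts [hmz f hf, hmz g hg]
    _ = c * √((∫ y, f y ^ 2 ∂sphMeasure d) * ∫ y, g y ^ 2 ∂sphMeasure d) := by
        rw [← Real.sqrt_mul (mul_nonneg hc hf2), mul_mul_mul_comm,
          Real.sqrt_mul (mul_self_nonneg c), Real.sqrt_mul_self hc]

end MarcinkiewiczZygmund

section BestApproximation

lemma abs_le_supNorm {X : Type*} [TopologicalSpace X] [CompactSpace X] {f : X → ℝ}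
    (hf : Continuous f) (x : X) : |f x| ≤ supNorm f :=
  le_csSup (isCompact_range hf.abs).bddAbove ⟨x, rfl⟩

variable {d : ℕ} {m : ℝ} {f g : Sph d → ℝ}

lemma nonneg_of_forall_abs_le {t : ℝ} (ht : ∀ y, |f y| ≤ t) : 0 ≤ t :=
  have := (sphMeasure d).nonempty_of_neZero
  (abs_nonneg _).trans (ht (Classical.arbitrary _))

lemma bestApprox_nonneg (d : ℕ) (m : ℝ) (f : Sph d → ℝ) : 0 ≤ bestApprox d m f :=
  Real.sInf_nonneg fun _ ⟨_, _, ht⟩ => nonneg_of_forall_abs_le ht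

lemma bestApprox_le_supNorm (hf : Continuous f) (hg : IsSphPoly d m g) :
    bestApprox d m f ≤ supNorm fun y => f y - g y :=
  csInf_le ⟨0, fun _ ⟨_, _, ht⟩ => nonneg_of_forall_abs_le ht⟩
    ⟨g, hg, abs_le_supNorm (hf.sub hg.continuous)⟩

lemma le_mul_bestApprox (hm : 0 < m) (hf : Continuous f) {a b : ℝ} (hb : 0 < b)
    (h : ∀ g, IsSphPoly d m g → ∀ t, (∀ y, |f y - g y| ≤ t) → a ≤ b * t) :
    a ≤ b * bestApprox d m f := by
  rw [← div_le_iff₀' hb]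
  refine le_csInf ⟨supNorm f, fun _ => 0, isSphPoly_const hm 0, ?_⟩ fun t ⟨g, hg, ht⟩ => ?_
  · simpa only [sub_zero] using abs_le_supNorm hf
  · rw [div_le_iff₀' hb]
    exact h g hg t ht

end BestApproximation

/-- The operator with zonal kernel `F((1 - x·y)/2)` against a signed measure. The kernel is a
polynomial in `(1 - x·y)/2`, which runs over the support `[0, 1]` of the beta distribution. -/
def zonalOp {d : ℕ} (F : Polynomial ℝ) (ν : SignedMeasure (Sph d)) (f : Sph d → ℝ) (x : Sph d) :
    ℝ :=
  sInt ν fun y => F.eval ((1 - ip x y) / 2) * f y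

section ZonalOp

variable {d : ℕ} {F : Polynomial ℝ} {ν : SignedMeasure (Sph d)} {f : Sph d → ℝ}

lemma isSphPoly_zonalOp {m : ℝ} (hF : F.natDegree < m) (ν : SignedMeasure (Sph d))
    (hf : Continuous f) : IsSphPoly d m (zonalOp F ν f) := by
  obtain ⟨p, hp, hpf⟩ :=
    exists_mvPolynomial_integral_zonal_mul ν.toJordanDecomposition.posPart hf F
  obtain ⟨q, hq, hqf⟩ :=
    exists_mvPolynomial_integral_zonal_mul ν.toJordanDecomposition.negPart hf F
  refine ⟨p - q, lt_of_le_of_lt ?_ hF, fun x => ?_⟩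
  · exact_mod_cast (MvPolynomial.totalDegree_sub p q).trans (max_le hp hq)
  · rw [zonalOp, sInt, hpf, hqf, map_sub]

lemma abs_zonalOp_le (hf : Continuous f) {t : ℝ} (ht : ∀ y, |f y| ≤ t) (x : Sph d) :
    |zonalOp F ν f x| ≤ (∫ y, |F.eval ((1 - ip x y) / 2)| ∂ν.totalVariation) * t := by
  calc _ ≤ ∫ y, |F.eval ((1 - ip x y) / 2) * f y| ∂ν.totalVariation :=
        abs_sInt_le ν (by fun_prop)
    _ ≤ ∫ y, |F.eval ((1 - ip x y) / 2)| * t ∂ν.totalVariation := by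
        refine integral_mono (integrable_of_continuous _ (by fun_prop))
          (integrable_of_continuous _ (by fun_prop)) fun y => ?_
        simp only [abs_mul]
        gcongr
        exact ht y
    _ = _ := integral_mul_const _ _

lemma supNorm_sub_zonalOp_le_mul_bestApprox {m A : ℝ} (hm : 0 < m) (hf : Continuous f)
    (hrep : ∀ g, IsSphPoly d m g → ∀ x, zonalOp F ν g x = g x)
    (hA : ∀ x, ∫ y, |F.eval ((1 - ip x y) / 2)| ∂ν.totalVariation ≤ A) :
    supNorm (fun x => f x - zonalOp F ν f x) ≤ (1 + A) * bestApprox d m f := by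
  have hA0 : 0 ≤ A := nonneg_of_forall_abs_le fun x =>
    (abs_of_nonneg (integral_nonneg fun y => abs_nonneg _)).trans_le (hA x)
  refine le_mul_bestApprox hm hf (by positivity) fun g hg t ht => ?_
  have ht0 : 0 ≤ t := nonneg_of_forall_abs_le ht
  refine Real.sSup_le ?_ (by positivity)
  rintro _ ⟨x, rfl⟩
  have hgc := hg.continuous
  have hsplit : f x - zonalOp F ν f x = (f x - g x) - zonalOp F ν (fun y => f y - g y) x := by
    have hsub : zonalOp F ν (fun y => f y - g y) x = zonalOp F ν f x - zonalOp F ν g x := by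
      simp only [zonalOp, mul_sub]
      exact sInt_sub ν (by fun_prop) (by fun_prop)
    rw [hsub, hrep g hg, sub_sub_sub_cancel_right]
  calc |f x - zonalOp F ν f x|
      ≤ |f x - g x| + |zonalOp F ν (fun y => f y - g y) x| := hsplit ▸ abs_sub _ _
    _ ≤ t + A * t := by
        gcongr
        · exact ht x
        · exact (abs_zonalOp_le (by fun_prop) ht x).trans (by gcongr; exact hA x)
    _ = (1 + A) * t := by ring

end ZonalOp

/-! ### The kernel operators -/

/-- The reproducing kernel `K_{d;N+1}` as a polynomial in `(1 - x·y)/2`. -/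
def sphKPoly (d N : ℕ) : Polynomial ℝ :=
  .C (christoffel (d / 2) (d / 2) N) * jacobiPoly (d / 2 + 1) (d / 2) N

/-- The damping factor of `Φ̃_{d;n,r}`, the normalized Jacobi polynomial
`p_{dn}^{(d/2+r,d/2-2)}`, as a polynomial in `(1 - x·y)/2`. -/
def dampingPoly (d n : ℕ) (r : ℝ) : Polynomial ℝ :=
  jacobiPoly (d / 2 + r + 1) (d / 2 - 1) (d * n)

/-- A common form of the kernels `Φ̃_{d;n,r}` (`R = 1`) and `Φ_{d;n,r}` (`R = (1 - X)^n`), as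
polynomials in `(1 - x·y)/2`. -/
def kernelPoly (d n : ℕ) (r : ℝ) (R : Polynomial ℝ) : Polynomial ℝ :=
  sphKPoly d ((d + 2) * n - 1) * (dampingPoly d n r * R)

section SphericalKernel

variable {d : ℕ}

lemma eval_sphKPoly (hd : 2 ≤ d) {N : ℕ} (hN : 0 < N) (t : ℝ) :
    (sphKPoly d (N - 1)).eval ((1 - t) / 2) = sphK d N t := by
  rw [sphKPoly, Polynomial.eval_mul, Polynomial.eval_C, ← sphK_succ_eq hd, Nat.sub_add_cancel hN]

lemma natDegree_sphKPoly_le (d N : ℕ) : (sphKPoly d N).natDegree ≤ N :=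
  (Polynomial.natDegree_C_mul_le _ _).trans (natDegree_jacobiPoly_le _ _ N)

lemma eval_sphKPoly_zero (d N : ℕ) : (sphKPoly d N).eval 0 = christoffel (d / 2) (d / 2) N := by
  rw [sphKPoly, Polynomial.eval_mul, Polynomial.eval_C, eval_jacobiPoly_zero, mul_one]

lemma integral_sphKPoly_mul (hd : 1 ≤ d) {N : ℕ} {g : Sph d → ℝ}
    (hg : IsSphPoly d (N + 1) g) (x : Sph d) :
    ∫ y, (sphKPoly d N).eval ((1 - ip x y) / 2) * g y ∂sphMeasure d = g x := by
  obtain ⟨p, hp, hpg⟩ := hg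
  obtain ⟨h, hdeg, hzero, hint⟩ := exists_zonal hd x p
  have ha : (0 : ℝ) < d / 2 := by positivity
  have hpN : p.totalDegree ≤ N := Nat.lt_succ_iff.1 (by exact_mod_cast hp)
  simp only [hpg]
  rw [hint (sphKPoly d N), ← hzero,
    ← christoffel_mul_integral_jacobiPoly_mul ha ha (hdeg.trans hpN), ← integral_const_mul]
  simp only [sphKPoly, Polynomial.eval_mul, Polynomial.eval_C, mul_assoc]

lemma integral_sphKPoly_sq (hd : 1 ≤ d) (N : ℕ) (x : Sph d) :
    ∫ y, (sphKPoly d N).eval ((1 - ip x y) / 2) ^ 2 ∂sphMeasure d =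
      christoffel (d / 2) (d / 2) N := by
  have hpoly := isSphPoly_zonal x (F := sphKPoly d N) (m := N + 1)
    (by exact_mod_cast Nat.lt_succ_iff.2 (natDegree_sphKPoly_le d N))
  simp only [sq]
  rw [integral_sphKPoly_mul hd hpoly, ip_self, sub_self, zero_div, eval_sphKPoly_zero]

lemma zonalOp_sphKPoly_mul_eq_self (hd : 1 ≤ d) {N : ℕ} {m k : ℝ} {P : Polynomial ℝ}
    (hP : P.natDegree + k ≤ N + 1) (hP0 : P.eval 0 = 1) (hm : 2 * N + 1 ≤ m)
    {ν : SignedMeasure (Sph d)} (hq : IsQuadrature d m ν) {g : Sph d → ℝ} (hg : IsSphPoly d k g)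
    (x : Sph d) : zonalOp (sphKPoly d N * P) ν g x = g x := by
  have hPg : IsSphPoly d (N + 1) fun y => P.eval ((1 - ip x y) / 2) * g y :=
    (hg.zonal_mul x P).mono hP
  have hKPg : IsSphPoly d m fun y =>
      (sphKPoly d N).eval ((1 - ip x y) / 2) * (P.eval ((1 - ip x y) / 2) * g y) := by
    have hK : ((sphKPoly d N).natDegree : ℝ) ≤ N := by exact_mod_cast natDegree_sphKPoly_le d N
    exact (hPg.zonal_mul x (sphKPoly d N)).mono (by linarith)
  simp only [zonalOp, Polynomial.eval_mul, mul_assoc]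
  rw [hq _ hKPg, integral_sphKPoly_mul hd hPg, ip_self, sub_self, zero_div, hP0, one_mul]

end SphericalKernel

section KernelOperator

variable {d n : ℕ} {r c : ℝ} {R : Polynomial ℝ} {ν : SignedMeasure (Sph d)}

lemma natDegree_dampingPoly_le (d n : ℕ) (r : ℝ) : (dampingPoly d n r).natDegree ≤ d * n :=
  natDegree_jacobiPoly_le _ _ _

lemma natDegree_dampingPoly_mul_le (r : ℝ) (hR : R.natDegree ≤ n) :
    (dampingPoly d n r * R).natDegree ≤ d * n + n :=
  Polynomial.natDegree_mul_le.trans (add_le_add (natDegree_dampingPoly_le d n r) hR)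

lemma natDegree_kernelPoly_lt (hn : 0 < n) (r : ℝ) (hR : R.natDegree ≤ n) :
    (kernelPoly d n r R).natDegree < 2 * (d + 2) * n := by
  calc _ ≤ ((d + 2) * n - 1) + (d * n + n) := Polynomial.natDegree_mul_le.trans
        (add_le_add (natDegree_sphKPoly_le _ _) (natDegree_dampingPoly_mul_le r hR))
    _ < 2 * (d + 2) * n := by
        have : 2 * (d + 2) * n = (d + 2) * n + (d * n + n) + n := by ring
        omega

lemma zonalOp_kernelPoly_eq_self (hd : 1 ≤ d) (hn : 0 < n) (hR : R.natDegree ≤ n)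
    (hR0 : R.eval 0 = 1) (hq : IsQuadrature d (2 * (d + 2) * n : ℕ) ν) {g : Sph d → ℝ}
    (hg : IsSphPoly d n g) (x : Sph d) : zonalOp (kernelPoly d n r R) ν g x = g x := by
  have hN : (((d + 2) * n - 1 : ℕ) : ℝ) = (d + 2) * n - 1 := by
    rw [Nat.cast_pred (by positivity)]
    push_cast
    ring
  have hdeg : ((dampingPoly d n r * R).natDegree : ℝ) ≤ d * n + n := by
    exact_mod_cast natDegree_dampingPoly_mul_le r hR
  refine zonalOp_sphKPoly_mul_eq_self hd ?_ ?_ ?_ hq hg x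
  · linarith
  · rw [Polynomial.eval_mul, hR0, dampingPoly, eval_jacobiPoly_zero, mul_one]
  · push_cast
    linarith

lemma integral_abs_kernelPoly_le (hd : 3 ≤ d) (hn : 0 < n) (hr : 0 ≤ r)
    (hR1 : ∀ u ∈ Icc (0 : ℝ) 1, |R.eval u| ≤ 1) (hc : 0 ≤ c)
    (hmz : IsMZ d (2 * (d + 2) * n : ℕ) ν c) (x : Sph d) :
    ∫ y, |(kernelPoly d n r R).eval ((1 - ip x y) / 2)| ∂ν.totalVariation ≤ c * kernelBound r := by
  set K := sphKPoly d ((d + 2) * n - 1)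
  set Q := dampingPoly d n r
  have hhalf : ((2 * (d + 2) * n : ℕ) : ℝ) / 2 = ((d + 2) * n : ℕ) := by push_cast; ring
  have hK : IsSphPoly d ((2 * (d + 2) * n : ℕ) / 2) fun y => K.eval ((1 - ip x y) / 2) := by
    refine isSphPoly_zonal x ?_
    rw [hhalf, Nat.cast_lt]
    exact (natDegree_sphKPoly_le _ _).trans_lt (Nat.sub_lt (by positivity) one_pos)
  have hQ : IsSphPoly d ((2 * (d + 2) * n : ℕ) / 2) fun y => Q.eval ((1 - ip x y) / 2) := by
    refine isSphPoly_zonal x ?_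
    rw [hhalf, Nat.cast_lt]
    exact (natDegree_dampingPoly_le _ _ _).trans_lt (by gcongr; omega)
  have hQ2 := integral_zonal (show 1 ≤ d by omega) x (Q ^ 2)
  simp only [Polynomial.eval_pow] at hQ2
  calc _ ≤ ∫ y, |K.eval ((1 - ip x y) / 2) * Q.eval ((1 - ip x y) / 2)| ∂ν.totalVariation := by
        refine integral_mono (integrable_of_continuous _ (by fun_prop))
          (integrable_of_continuous _ (by fun_prop)) fun y => ?_
        simp only [kernelPoly, Polynomial.eval_mul, ← mul_assoc]
        rw [abs_mul]
        exact mul_le_of_le_one_right (abs_nonneg _) (hR1 _ (one_sub_ip_div_two_mem_Icc x y))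
    _ ≤ c * √((∫ y, K.eval ((1 - ip x y) / 2) ^ 2 ∂sphMeasure d) *
          ∫ y, Q.eval ((1 - ip x y) / 2) ^ 2 ∂sphMeasure d) := hmz.integral_abs_mul_le hc hK hQ
    _ ≤ c * kernelBound r := by
        rw [integral_sphKPoly_sq (by omega), hQ2]
        gcongr
        exact (Real.sqrt_le_left (kernelBound_pos r).le).2 (christoffel_mul_integral_sq_le hd hn hr)

lemma zonalOp_kernelPoly_near_best (hd : 3 ≤ d) (hn : 0 < n) (hr : 0 ≤ r) (hR : R.natDegree ≤ n)
    (hR0 : R.eval 0 = 1) (hR1 : ∀ u ∈ Icc (0 : ℝ) 1, |R.eval u| ≤ 1)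
    (hq : IsQuadrature d (2 * (d + 2) * n : ℕ) ν) (hmz : IsMZ d (2 * (d + 2) * n : ℕ) ν c)
    {f : Sph d → ℝ} (hf : Continuous f) :
    bestApprox d (2 * (d + 2) * n : ℕ) f ≤
        supNorm (fun y => f y - zonalOp (kernelPoly d n r R) ν f y) ∧
      supNorm (fun y => f y - zonalOp (kernelPoly d n r R) ν f y) ≤
        (1 + kernelBound r) * c * bestApprox d n f := by
  have hc : 1 ≤ c := hmz.one_le hq (by positivity)
  have hdeg := natDegree_kernelPoly_lt (d := d) hn r hR
  refine ⟨bestApprox_le_supNorm hf (isSphPoly_zonalOp (by exact_mod_cast hdeg) ν hf), ?_⟩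
  calc _ ≤ (1 + c * kernelBound r) * bestApprox d n f :=
        supNorm_sub_zonalOp_le_mul_bestApprox (by positivity) hf
          (fun g hg => zonalOp_kernelPoly_eq_self (by omega) hn hR hR0 hq hg)
          (integral_abs_kernelPoly_le hd hn hr hR1 (by linarith) hmz)
    _ ≤ (1 + kernelBound r) * c * bestApprox d n f := by
        gcongr
        · exact bestApprox_nonneg d n f
        · linarith

lemma eval_kernelPoly (hd : 3 ≤ d) (hn : 0 < n) (hr : 0 ≤ r) (R : Polynomial ℝ) (t : ℝ) :
    (kernelPoly d n r R).eval ((1 - t) / 2) = PhiTilde d n r t * R.eval ((1 - t) / 2) := by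
  rw [kernelPoly, Polynomial.eval_mul, Polynomial.eval_mul, dampingPoly,
    eval_sphKPoly (by omega) (by positivity), PhiTilde_eq hd hr, mul_assoc]

lemma sigmaTildeOp_eq_zonalOp (hd : 3 ≤ d) (hn : 0 < n) (hr : 0 ≤ r) (ν : SignedMeasure (Sph d))
    (f : Sph d → ℝ) : sigmaTildeOp d n r ν f = zonalOp (kernelPoly d n r 1) ν f := by
  ext x
  simp only [sigmaTildeOp, zonalOp, eval_kernelPoly hd hn hr, Polynomial.eval_one, mul_one,
    mul_comm (f _)]

lemma sigmaOp_eq_zonalOp (hd : 3 ≤ d) (hn : 0 < n) (hr : 0 ≤ r) (ν : SignedMeasure (Sph d))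
    (f : Sph d → ℝ) : sigmaOp d n r ν f = zonalOp (kernelPoly d n r ((1 - .X) ^ n)) ν f := by
  have hcompl (t : ℝ) : 1 - (1 - t) / 2 = (1 + t) / 2 := by ring
  ext x
  simp only [sigmaOp, zonalOp, Phi, eval_kernelPoly hd hn hr, Polynomial.eval_pow,
    Polynomial.eval_sub, Polynomial.eval_one, Polynomial.eval_X, hcompl, mul_comm (f _)]

end KernelOperator

lemma mul_bestApprox_le_mul_rpow_mul_bestApprox {d : ℕ} (hd : 1 ≤ d) {C c : ℝ} (hC : 0 ≤ C)
    (hc : 0 ≤ c) (m : ℝ) (f : Sph d → ℝ) :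
    C * c * bestApprox d m f ≤ C * (d : ℝ) ^ ((1 : ℝ) / 6) * c * bestApprox d m f := by
  have hrpow : 1 ≤ (d : ℝ) ^ ((1 : ℝ) / 6) :=
    Real.one_le_rpow (by exact_mod_cast hd) (by norm_num)
  have := bestApprox_nonneg d m f
  gcongr
  exact le_mul_of_one_le_right hC hrpow

theorem sigmaOp_near_best_general :
    ∀ r : ℝ, 0 ≤ r → ∃ C : ℝ, 0 < C ∧
      ∀ (d n : ℕ) (f : Sph d → ℝ) (ν : SignedMeasure (Sph d)) (c : ℝ),
        3 ≤ d → 0 < n → Continuous f →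
        IsQuadrature d ((2 * (d + 2) * n : ℕ) : ℝ) ν →
        IsMZ d ((2 * (d + 2) * n : ℕ) : ℝ) ν c →
        (bestApprox d ((2 * (d + 2) * n : ℕ) : ℝ) f ≤
            supNorm (fun y => f y - sigmaTildeOp d n r ν f y) ∧
          supNorm (fun y => f y - sigmaTildeOp d n r ν f y) ≤ C * c * bestApprox d (n : ℝ) f) ∧
        (bestApprox d ((2 * (d + 2) * n : ℕ) : ℝ) f ≤
            supNorm (fun y => f y - sigmaOp d n r ν f y) ∧
          supNorm (fun y => f y - sigmaOp d n r ν f y) ≤ C * c * bestApprox d (n : ℝ) f) := by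
  intro r hr
  refine ⟨1 + kernelBound r, add_pos one_pos (kernelBound_pos r),
    fun d n f ν c hd hn hf hq hmz => ?_⟩
  rw [sigmaTildeOp_eq_zonalOp hd hn hr, sigmaOp_eq_zonalOp hd hn hr]
  refine ⟨zonalOp_kernelPoly_near_best hd hn hr (by simp) (by simp) (by simp) hq hmz hf,
    zonalOp_kernelPoly_near_best hd hn hr ?_ (by simp) (fun u hu => ?_) hq hmz hf⟩
  · compute_degree
  · simp only [Polynomial.eval_pow, Polynomial.eval_sub, Polynomial.eval_one, Polynomial.eval_X]
    have := hu.2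
    rw [abs_of_nonneg (pow_nonneg (by linarith) n)]
    exact pow_le_one₀ (by linarith) (by linarith [hu.1])

/-- Near-best approximation by `σ̃_{d;n,r}(ν,·)` and `σ_{d;n,r}(ν,·)` for
Marcinkiewicz–Zygmund quadrature measures, with constant depending on `r` only. -/
theorem sigmaOp_near_best :
    ∀ r : ℝ, 0 ≤ r → ∃ C : ℝ, 0 < C ∧
      ∀ (d n : ℕ) (f : Sph d → ℝ) (ν : SignedMeasure (Sph d)) (c : ℝ),
        3 ≤ d → 2 * (d + 1) ≤ n → Continuous f →
        IsQuadrature d ((2 * (d + 2) * n : ℕ) : ℝ) ν →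
        IsMZ d ((2 * (d + 2) * n : ℕ) : ℝ) ν c →
        (bestApprox d ((2 * (d + 2) * n : ℕ) : ℝ) f ≤
            supNorm (fun y => f y - sigmaTildeOp d n r ν f y) ∧
          supNorm (fun y => f y - sigmaTildeOp d n r ν f y) ≤
            C * (d : ℝ) ^ ((1 : ℝ)/6) * c * bestApprox d (n : ℝ) f) ∧
        (bestApprox d ((2 * (d + 2) * n : ℕ) : ℝ) f ≤
            supNorm (fun y => f y - sigmaOp d n r ν f y) ∧
          supNorm (fun y => f y - sigmaOp d n r ν f y) ≤
            C * (d : ℝ) ^ ((1 : ℝ)/6) * c * bestApprox d (n : ℝ) f) := by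
  intro r hr
  obtain ⟨C, hC, h⟩ := sigmaOp_near_best_general r hr
  refine ⟨C, hC, fun d n f ν c hd hn hf hq hmz => ?_⟩
  have hn0 : 0 < n := by omega
  have hle := mul_bestApprox_le_mul_rpow_mul_bestApprox (show 1 ≤ d by omega) hC.le
    (zero_le_one.trans (hmz.one_le hq (by positivity))) n f
  exact (h d n f ν c hd hn0 hf hq hmz).imp
    (.imp_right fun hub => hub.trans hle) (.imp_right fun hub => hub.trans hle)

end
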